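/- arXiv:1304.0296 — 3 statements merged into one kernel-verified Lean document; each statement's English description precedes it below -/
import Mathlib

section
/- Let A be an n-by-n complex matrix such that 0 lies on the boundary of the numerical range W(A). Then d(A) ≤ dim span{x ∈ ℂ^n : ⟨Ax, x⟩ = 0}. Moreover, equality holds if and only if 0 is an extreme point of W(A) (i.e., 0 ∈ W(A) and 0 cannot be written as tλ₁ + (1−t)λ₂ with λ₁, λ₂ ∈ W(A) both nonzero and 0 < t < 1). -/
open Matrix Polynomial

noncomputable def zdi {m : Type*} [Fintype m] (A : Matrix m m ℂ) : ℕ :=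
  sSup {k : ℕ | ∃ V : Matrix m (Fin k) ℂ, Vᴴ * V = 1 ∧ Vᴴ * A * V = 0}

noncomputable def matRe {m : Type*} (A : Matrix m m ℂ) : Matrix m m ℂ :=
  (2⁻¹ : ℂ) • (A + Aᴴ)

noncomputable def iNonneg {m : Type*} [Fintype m] [DecidableEq m] (M : Matrix m m ℂ) : ℕ :=
  if hM : M.IsHermitian then (Finset.univ.filter fun i => 0 ≤ hM.eigenvalues i).card else 0

def numRange {m : Type*} [Fintype m] (A : Matrix m m ℂ) : Set ℂ :=
  {z | ∃ x : m → ℂ, star x ⬝ᵥ x = 1 ∧ star x ⬝ᵥ A.mulVec x = z}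

noncomputable def arg2pi (z : ℂ) : ℝ :=
  if 0 ≤ Complex.arg z then Complex.arg z else Complex.arg z + 2 * Real.pi

def UnitSim {m : Type*} [Fintype m] [DecidableEq m] (A B : Matrix m m ℂ) : Prop :=
  ∃ U ∈ Matrix.unitaryGroup m ℂ, Uᴴ * A * U = B

def UnitSimG {m l : Type*} [Fintype m] [DecidableEq m] [Fintype l] [DecidableEq l]
    (A : Matrix m m ℂ) (B : Matrix l l ℂ) : Prop :=
  ∃ e : m ≃ l, UnitSim (Matrix.reindex e e A) B

def superMat (n : ℕ) (w : ℕ → ℂ) : Matrix (Fin n) (Fin n) ℂ :=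
  Matrix.of fun i j => if (j : ℕ) = (i : ℕ) + 1 then w (i : ℕ) else 0

def cycMat (n : ℕ) (w : ℕ → ℂ) : Matrix (Fin n) (Fin n) ℂ :=
  Matrix.of fun i j => if (j : ℕ) = ((i : ℕ) + 1) % n then w (i : ℕ) else 0

/-- Isotropic set. -/
def zset {n : ℕ} (A : Matrix (Fin n) (Fin n) ℂ) : Set (Fin n → ℂ) :=
  {x : Fin n → ℂ | star x ⬝ᵥ A.mulVec x = 0}

lemma q_add_smul {n : ℕ} (A : Matrix (Fin n) (Fin n) ℂ) (x y : Fin n → ℂ) (c : ℂ) :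
    star (x + c • y) ⬝ᵥ A.mulVec (x + c • y) =
      star x ⬝ᵥ A.mulVec x + c * (star x ⬝ᵥ A.mulVec y) + star c * (star y ⬝ᵥ A.mulVec x)
        + star c * c * (star y ⬝ᵥ A.mulVec y) := by
  simp only [star_add, star_smul, Matrix.mulVec_add, Matrix.mulVec_smul, add_dotProduct,
    dotProduct_add, smul_dotProduct, dotProduct_smul, smul_eq_mul]
  ring

lemma q_smul {n : ℕ} (A : Matrix (Fin n) (Fin n) ℂ) (y : Fin n → ℂ) (c : ℂ) :
    star (c • y) ⬝ᵥ A.mulVec (c • y) = star c * c * (star y ⬝ᵥ A.mulVec y) := by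
  have := q_add_smul A 0 y c
  simpa using this

lemma polar {n : ℕ} (A : Matrix (Fin n) (Fin n) ℂ) (R : Submodule ℂ (Fin n → ℂ))
    (h : ∀ x ∈ R, star x ⬝ᵥ A.mulVec x = 0) (x y : Fin n → ℂ) (hx : x ∈ R) (hy : y ∈ R) :
    star x ⬝ᵥ A.mulVec y = 0 := by
  have h1 := q_add_smul A x y 1
  have h2 := q_add_smul A x y Complex.I
  rw [h _ (R.add_mem hx (R.smul_mem _ hy)), h x hx, h y hy] at h1 h2
  simp at h1 h2
  have h3 : Complex.I * (star x ⬝ᵥ A.mulVec y - star y ⬝ᵥ A.mulVec x) = 0 := by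
    linear_combination -h2
  have h4 := (mul_eq_zero.mp h3).resolve_left Complex.I_ne_zero
  linear_combination (h4 - h1) / 2

lemma exists_dil {n : ℕ} (A : Matrix (Fin n) (Fin n) ℂ) (R : Submodule ℂ (Fin n → ℂ))
    (h : ∀ x ∈ R, star x ⬝ᵥ A.mulVec x = 0) :
    ∃ V : Matrix (Fin n) (Fin (Module.finrank ℂ R)) ℂ, Vᴴ * V = 1 ∧ Vᴴ * A * V = 0 := by
  let e := WithLp.linearEquiv 2 ℂ (Fin n → ℂ)
  let R' : Submodule ℂ (EuclideanSpace ℂ (Fin n)) := R.comap e.toLinearMap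
  have hfr : Module.finrank ℂ R' = Module.finrank ℂ R := by
    have := LinearEquiv.finrank_map_eq e.symm R
    rw [Submodule.map_equiv_eq_comap_symm] at this
    exact this
  rw [← hfr]
  let b := stdOrthonormalBasis ℂ R'
  refine ⟨Matrix.of fun i j => ((b j : R') : EuclideanSpace ℂ (Fin n)) i, ?_, ?_⟩
  · ext i j
    have := orthonormal_iff_ite.mp b.orthonormal i j
    rw [Submodule.coe_inner, EuclideanSpace.inner_eq_star_dotProduct] at this
    rw [Matrix.one_apply, ← this, dotProduct_comm]
    rfl
  · ext i j
    have := polar A R h (e (b i)) (e (b j)) (b i).2 (b j).2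
    rw [Matrix.mul_assoc]
    exact this

lemma range_dil {n k : ℕ} (A : Matrix (Fin n) (Fin n) ℂ) (V : Matrix (Fin n) (Fin k) ℂ)
    (h1 : Vᴴ * V = 1) (h2 : Vᴴ * A * V = 0) :
    Module.finrank ℂ (LinearMap.range V.mulVecLin) = k ∧
    ∀ x ∈ LinearMap.range V.mulVecLin, star x ⬝ᵥ A.mulVec x = 0 := by
  constructor
  · rw [LinearMap.finrank_range_of_inj]
    · simp
    · intro c d hcd
      simp only [Matrix.mulVecLin_apply] at hcd
      have := congrArg (Vᴴ.mulVec) hcd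
      simpa [Matrix.mulVec_mulVec, h1] using this
  · rintro _ ⟨c, rfl⟩
    rw [Matrix.mulVecLin_apply, Matrix.star_mulVec, ← Matrix.dotProduct_mulVec,
      Matrix.mulVec_mulVec, Matrix.mulVec_mulVec, h2]
    simp

lemma range_le {n k : ℕ} (A : Matrix (Fin n) (Fin n) ℂ) (V : Matrix (Fin n) (Fin k) ℂ)
    (h1 : Vᴴ * V = 1) (h2 : Vᴴ * A * V = 0) :
    LinearMap.range V.mulVecLin ≤ Submodule.span ℂ (zset A) :=
  fun x hx => Submodule.subset_span ((range_dil A V h1 h2).2 x hx)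

lemma dil_le {n k : ℕ} (A : Matrix (Fin n) (Fin n) ℂ) (V : Matrix (Fin n) (Fin k) ℂ)
    (h1 : Vᴴ * V = 1) (h2 : Vᴴ * A * V = 0) :
    k ≤ Module.finrank ℂ (Submodule.span ℂ (zset A)) := by
  rw [← (range_dil A V h1 h2).1]
  exact Submodule.finrank_mono (range_le A V h1 h2)

lemma dil_bdd {n : ℕ} (A : Matrix (Fin n) (Fin n) ℂ) :
    BddAbove {k : ℕ | ∃ V : Matrix (Fin n) (Fin k) ℂ, Vᴴ * V = 1 ∧ Vᴴ * A * V = 0} :=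
  ⟨_, fun _ ⟨V, h1, h2⟩ => dil_le A V h1 h2⟩

lemma zdi_att {n : ℕ} (A : Matrix (Fin n) (Fin n) ℂ) :
    ∃ V : Matrix (Fin n) (Fin (zdi A)) ℂ, Vᴴ * V = 1 ∧ Vᴴ * A * V = 0 :=
  Nat.sSup_mem (s := {k : ℕ | ∃ V : Matrix (Fin n) (Fin k) ℂ, Vᴴ * V = 1 ∧ Vᴴ * A * V = 0})
    ⟨0, 0, by ext i; exact i.elim0, by ext i; exact i.elim0⟩ (dil_bdd A)

/-- Two isotropic combinations, so that `y` lies in the span of the isotropic vectors. -/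
lemma mem_span_of_opp {n : ℕ} (A : Matrix (Fin n) (Fin n) ℂ) (x y : Fin n → ℂ) (l : ℂ) (c : ℝ)
    (hc : 0 < c) (hl : l ≠ 0) (hx : star x ⬝ᵥ A.mulVec x = l)
    (hy : star y ⬝ᵥ A.mulVec y = -(c : ℂ) * l) : y ∈ Submodule.span ℂ (zset A) := by
  obtain ⟨u, hu⟩ : ∃ u, u = (star x ⬝ᵥ A.mulVec y) / l := ⟨_, rfl⟩
  obtain ⟨v, hv⟩ : ∃ v, v = (star y ⬝ᵥ A.mulVec x) / l := ⟨_, rfl⟩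
  have hu' : star x ⬝ᵥ A.mulVec y = u * l := by rw [hu]; field_simp
  have hv' : star y ⬝ᵥ A.mulVec x = v * l := by rw [hv]; field_simp
  obtain ⟨w, hw, r, hr⟩ : ∃ w : ℂ, w ≠ 0 ∧ ∃ r : ℝ, w * u + star w * v = r := by
    by_cases h : u - star v = 0
    · refine ⟨1, one_ne_zero, 2 * v.re, ?_⟩
      have : u = star v := by linear_combination h
      rw [this]
      apply Complex.ext <;> simp; ring
    · refine ⟨star (u - star v), star_ne_zero.mpr h,
        (star (u - star v) * u + star (star (u - star v)) * v).re, ?_⟩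
      apply Complex.ext <;> simp; ring
  have hm : 0 < Complex.normSq w := Complex.normSq_pos.mpr hw
  have hmw : star w * w = (Complex.normSq w : ℂ) := Complex.normSq_eq_conj_mul_self.symm
  obtain ⟨a, ha⟩ : ∃ a, a = c * Complex.normSq w := ⟨_, rfl⟩
  have hapos : 0 < a := by rw [ha]; positivity
  have key : ∀ s : ℝ, 1 + s * r - s ^ 2 * a = 0 → x + ((s : ℂ) * w) • y ∈ zset A := by
    intro s hs
    change star _ ⬝ᵥ A.mulVec _ = 0
    rw [q_add_smul, hx, hy, hu', hv']
    have hs' : (1 : ℂ) + s * r - s ^ 2 * a = 0 := by exact_mod_cast hs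
    have hss : star ((s : ℂ) * w) = s * star w := by simp [mul_comm]
    rw [ha] at hs'
    push_cast at hs'
    rw [hss]
    linear_combination l * hs' + s * l * hr - s ^ 2 * c * l * hmw
  have hD : 0 < r ^ 2 + 4 * a := by positivity
  obtain ⟨d, hd⟩ : ∃ d, d = √(r ^ 2 + 4 * a) := ⟨_, rfl⟩
  have hdpos : 0 < d := hd ▸ Real.sqrt_pos.mpr hD
  have hd2 : d ^ 2 = r ^ 2 + 4 * a := hd ▸ Real.sq_sqrt hD.le
  have k1 := Submodule.subset_span (R := ℂ) (key ((r + d) / (2 * a)) (by field_simp; linear_combination -hd2))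
  have k2 := Submodule.subset_span (R := ℂ) (key ((r - d) / (2 * a)) (by field_simp; linear_combination -hd2))
  have k3 := Submodule.sub_mem _ k1 k2
  rw [add_sub_add_left_eq_sub, ← sub_smul] at k3
  refine (Submodule.smul_mem_iff _ ?_).mp k3
  rw [← sub_mul]
  refine mul_ne_zero ?_ hw
  rw [← Complex.ofReal_sub]
  have : (r + d) / (2 * a) - (r - d) / (2 * a) = d / a := by field_simp; ring
  rw [this]
  exact_mod_cast (div_pos hdpos hapos).ne'

lemma exists_normalized {n : ℕ} (A : Matrix (Fin n) (Fin n) ℂ) (x : Fin n → ℂ)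
    (hx : star x ⬝ᵥ A.mulVec x ≠ 0) :
    ∃ p : ℝ, 0 < p ∧ (p : ℂ) * (star x ⬝ᵥ A.mulVec x) ∈ numRange A := by
  have hx0 : x ≠ 0 := by rintro rfl; simp at hx
  obtain ⟨N, hN⟩ : ∃ N : ℝ, N = ∑ i, Complex.normSq (x i) := ⟨_, rfl⟩
  have hNx : star x ⬝ᵥ x = (N : ℂ) := by
    rw [hN, dotProduct]
    push_cast
    exact Finset.sum_congr rfl fun i _ => Complex.normSq_eq_conj_mul_self.symm
  have hNpos : 0 < N := by
    obtain ⟨i, hi⟩ := Function.ne_iff.mp hx0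
    rw [hN]
    exact Finset.sum_pos' (fun i _ => Complex.normSq_nonneg _)
      ⟨i, Finset.mem_univ _, Complex.normSq_pos.mpr hi⟩
  have hsq : (√N)⁻¹ * (√N)⁻¹ = N⁻¹ := by
    rw [← mul_inv, Real.mul_self_sqrt hNpos.le]
  have hsq' : star (((√N)⁻¹ : ℝ) : ℂ) * (((√N)⁻¹ : ℝ) : ℂ) = ((N⁻¹ : ℝ) : ℂ) := by
    rw [← hsq]; push_cast; simp
  refine ⟨N⁻¹, by positivity, (((√N)⁻¹ : ℝ) : ℂ) • x, ?_, ?_⟩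
  · have := q_smul 1 x (((√N)⁻¹ : ℝ) : ℂ)
    rw [Matrix.one_mulVec, Matrix.one_mulVec, hsq', hNx] at this
    rw [this]
    exact_mod_cast inv_mul_cancel₀ hNpos.ne'
  · rw [q_smul, hsq']

lemma numRange_closed {n : ℕ} (A : Matrix (Fin n) (Fin n) ℂ) : IsClosed (numRange A) := by
  have hc : IsCompact {x : Fin n → ℂ | star x ⬝ᵥ x = 1} := by
    apply Metric.isCompact_of_isClosed_isBounded
    · exact isClosed_eq (by fun_prop) continuous_const
    · refine (Metric.isBounded_closedBall (x := (0 : Fin n → ℂ)) (r := 1)).subset ?_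
      intro x hx
      rw [mem_closedBall_zero_iff, pi_norm_le_iff_of_nonneg zero_le_one]
      intro i
      have h1 : ∑ i, Complex.normSq (x i) = 1 := by
        have : ((∑ i, Complex.normSq (x i) : ℝ) : ℂ) = 1 := by
          rw [← show star x ⬝ᵥ x = 1 from hx, dotProduct]
          push_cast
          exact Finset.sum_congr rfl fun i _ => Complex.normSq_eq_conj_mul_self
        exact_mod_cast this
      have h2 := Finset.single_le_sum (f := fun i => Complex.normSq (x i))
        (fun i _ => Complex.normSq_nonneg _) (Finset.mem_univ i)
      rw [h1, Complex.normSq_eq_norm_sq] at h2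
      nlinarith [norm_nonneg (x i)]
  have : numRange A = (fun x => star x ⬝ᵥ A.mulVec x) '' {x : Fin n → ℂ | star x ⬝ᵥ x = 1} := by
    ext z; rfl
  rw [this]
  exact (hc.image (by fun_prop)).isClosed

/-- Proposition 2.1. -/
theorem zdi_le_finrank_span_of_zero_mem_frontier {n : ℕ} (A : Matrix (Fin n) (Fin n) ℂ)
    (h0 : (0 : ℂ) ∈ frontier (numRange A)) :
    zdi A ≤ Module.finrank ℂ (Submodule.span ℂ {x : Fin n → ℂ | star x ⬝ᵥ A.mulVec x = 0}) ∧
    (zdi A = Module.finrank ℂ (Submodule.span ℂ {x : Fin n → ℂ | star x ⬝ᵥ A.mulVec x = 0}) ↔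
      ((0 : ℂ) ∈ numRange A ∧
        ¬ ∃ (t : ℝ) (l₁ l₂ : ℂ), l₁ ∈ numRange A ∧ l₂ ∈ numRange A ∧ l₁ ≠ 0 ∧ l₂ ≠ 0 ∧
          0 < t ∧ t < 1 ∧ (0 : ℂ) = (t : ℂ) * l₁ + (1 - (t : ℂ)) * l₂)) := by
  change zdi A ≤ Module.finrank ℂ (Submodule.span ℂ (zset A)) ∧
    (zdi A = Module.finrank ℂ (Submodule.span ℂ (zset A)) ↔ _)
  obtain ⟨V, h1, h2⟩ := zdi_att A
  have hle := dil_le A V h1 h2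
  refine ⟨hle, fun heq => ⟨?_, ?_⟩, fun hext => le_antisymm hle ?_⟩
  · exact (numRange_closed A).frontier_subset h0
  · rintro ⟨t, l₁, l₂, ⟨x, -, hx⟩, ⟨y, -, hy⟩, hl1, hl2, ht0, ht1, h⟩
    have hR : LinearMap.range V.mulVecLin = Submodule.span ℂ (zset A) :=
      Submodule.eq_of_le_of_finrank_eq (range_le A V h1 h2)
        ((range_dil A V h1 h2).1.trans heq)
    have ht1' : 0 < 1 - t := by linarith
    have ht2 : (1 - (t : ℂ)) ≠ 0 := by exact_mod_cast ht1'.ne'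
    have hy' : l₂ = -((t / (1 - t) : ℝ) : ℂ) * l₁ := by
      push_cast
      field_simp
      linear_combination -h
    have hmem := mem_span_of_opp A x y l₁ (t / (1 - t)) (div_pos ht0 ht1') hl1 hx (hy.trans hy')
    rw [← hR] at hmem
    exact hl2 (hy.symm.trans ((range_dil A V h1 h2).2 y hmem))
  · let R : Submodule ℂ (Fin n → ℂ) :=
      { carrier := zset A
        zero_mem' := by simp [zset]
        smul_mem' := fun c x hx => by
          change star (c • x) ⬝ᵥ A.mulVec (c • x) = 0
          rw [q_smul, show star x ⬝ᵥ A.mulVec x = 0 from hx, mul_zero]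
        add_mem' := fun {x y} hx hy => by
          change star (x + y) ⬝ᵥ A.mulVec (x + y) = 0
          by_contra hne
          have hx : star x ⬝ᵥ A.mulVec x = 0 := hx
          have hy : star y ⬝ᵥ A.mulVec y = 0 := hy
          have e1 := q_add_smul A x y 1
          have e2 := q_add_smul A x y (-1)
          rw [one_smul] at e1
          have e3 : star (x + (-1 : ℂ) • y) ⬝ᵥ A.mulVec (x + (-1 : ℂ) • y) =
              -(star (x + y) ⬝ᵥ A.mulVec (x + y)) := by
            rw [e1, e2, hx, hy]
            simp
            ring
          obtain ⟨p, hp, hp'⟩ := exists_normalized A (x + y) hne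
          obtain ⟨q, hq, hq'⟩ := exists_normalized A (x + (-1 : ℂ) • y)
            (by rw [e3]; exact neg_ne_zero.mpr hne)
          refine hext.2 ⟨q / (p + q), _, _, hp', hq', ?_, ?_, by positivity, ?_, ?_⟩
          · exact mul_ne_zero (by exact_mod_cast hp.ne') hne
          · rw [e3]
            exact mul_ne_zero (by exact_mod_cast hq.ne') (neg_ne_zero.mpr hne)
          · rw [div_lt_one (by positivity)]
            linarith
          · rw [e3]
            have : (p : ℂ) + q ≠ 0 := by exact_mod_cast (add_pos hp hq).ne'
            push_cast
            field_simp
            ring }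
    have hR : Submodule.span ℂ (zset A) = R := Submodule.span_eq R
    rw [hR]
    exact le_csSup (dil_bdd A) (exists_dil A R fun x hx => hx)
end

section
/- For any n-by-n complex matrix A, d(A) = min over θ ∈ ℝ of i_{≥0}(Re(e^{−iθ}A)), where the minimum is attained. -/
open Matrix Polynomial

def Compr {ι κ : Type} [Fintype ι] [Fintype κ] [DecidableEq ι] [DecidableEq κ]
    (p : ι → ℝ) (q : κ → ℝ) : Prop :=
  ∃ C : Matrix κ ι ℝ, Cᵀ * C = 1 ∧ Cᵀ * Matrix.diagonal q * C = Matrix.diagonal p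

section compr
set_option linter.unusedSectionVars false
variable {ι κ μ ι' κ' : Type} [Fintype ι] [Fintype κ] [DecidableEq ι] [DecidableEq κ]
  [Fintype μ] [DecidableEq μ] [Fintype ι'] [Fintype κ'] [DecidableEq ι'] [DecidableEq κ']

theorem Compr.trans {p : ι → ℝ} {q : κ → ℝ} {s : μ → ℝ} (h1 : Compr p q) (h2 : Compr q s) :
    Compr p s := by
  obtain ⟨C, hC1, hC2⟩ := h1
  obtain ⟨D, hD1, hD2⟩ := h2
  refine ⟨D * C, ?_, ?_⟩
  · rw [Matrix.transpose_mul, Matrix.mul_assoc, ← Matrix.mul_assoc Dᵀ, hD1, Matrix.one_mul, hC1]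
  · rw [Matrix.transpose_mul, ← hC2, ← hD2]
    simp only [Matrix.mul_assoc]

theorem Compr.comp (p : ι → ℝ) (f : κ → ι) (hf : Function.Injective f) : Compr (p ∘ f) p := by
  refine ⟨Matrix.of fun i k => if i = f k then 1 else 0, ?_, ?_⟩
  · ext a b
    simp [Matrix.mul_apply, Matrix.one_apply, hf.eq_iff]
    grind
  · ext a b
    simp [Matrix.mul_apply, Matrix.diagonal_apply, hf.eq_iff]
    grind

theorem Compr.sum {p : ι → ℝ} {q : κ → ℝ} {p' : ι' → ℝ} {q' : κ' → ℝ}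
    (h1 : Compr p q) (h2 : Compr p' q') : Compr (Sum.elim p p') (Sum.elim q q') := by
  obtain ⟨C, hC1, hC2⟩ := h1
  obtain ⟨D, hD1, hD2⟩ := h2
  refine ⟨Matrix.fromBlocks C 0 0 D, ?_, ?_⟩
  · simp [Matrix.fromBlocks_transpose, Matrix.fromBlocks_multiply, hC1, hD1]
  · rw [← Matrix.fromBlocks_diagonal, ← Matrix.fromBlocks_diagonal, Matrix.fromBlocks_transpose,
      Matrix.fromBlocks_multiply, Matrix.fromBlocks_multiply]
    simp only [Matrix.transpose_zero, Matrix.mul_zero, Matrix.zero_mul, add_zero, zero_add, hC2, hD2]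

/-- sign of a product of differences -/
theorem sign_prod_sub (s : Finset ι) (p : ι → ℝ) (x : ℝ) (h : ∀ i ∈ s, p i ≠ x) :
    0 < (-1 : ℝ) ^ (s.filter fun i => x < p i).card * ∏ i ∈ s, (x - p i) := by
  induction s using Finset.induction_on with
  | empty => simp
  | insert a s ha ih =>
    have ih' := ih fun i hi => h i (Finset.mem_insert_of_mem hi)
    have hax := h a (Finset.mem_insert_self _ _)
    rw [Finset.prod_insert ha, Finset.filter_insert]
    split_ifs with hx
    · rw [Finset.card_insert_of_notMem (by simp [ha]), pow_succ]
      nlinarith [mul_pos ih' (sub_pos.2 hx)]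
    · have : 0 < x - p a := sub_pos.2 (lt_of_le_of_ne (not_lt.1 hx) hax)
      nlinarith [mul_pos ih' this]

theorem compr_strict (p : ι → ℝ) (q : κ → ℝ) (hc : Fintype.card κ = Fintype.card ι + 1)
    (hne : ∀ i j, p i ≠ q j)
    (h1 : ∀ t, (Finset.univ.filter fun i => p i < t).card ≤ (Finset.univ.filter fun j => q j < t).card)
    (h2 : ∀ t, (Finset.univ.filter fun j => q j ≤ t).card ≤
      (Finset.univ.filter fun i => p i ≤ t).card + 1) : Compr p q := by
  have hle : ∀ j, (Finset.univ.filter fun i => p i ≤ q j) = (Finset.univ.filter fun i => p i < q j) := by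
    intro j; ext i; simp [lt_iff_le_and_ne, hne i j]
  have hq : ∀ j, (Finset.univ.filter fun l => q l ≤ q j) =
      insert j (Finset.univ.filter fun l => q l < q j) := by
    intro j
    refine (Finset.eq_of_subset_of_card_le ?_ ?_).symm
    · intro l; simp; rintro (rfl | h)
      · exact le_rfl
      · exact h.le
    · rw [Finset.card_insert_of_notMem (by simp)]
      have := h1 (q j); have := h2 (q j); rw [hle] at this; omega
  have hinj : Function.Injective q := by
    intro a b hab
    have : a ∈ (Finset.univ.filter fun l => q l ≤ q b) := by simp [hab]
    rw [hq] at this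
    simpa [hab] using this
  have hcnt : ∀ j, (Finset.univ.filter fun i => q j < p i).card =
      ((Finset.univ.erase j).filter fun l => q j < q l).card := by
    intro j
    have e1 := Finset.card_filter_add_card_filter_not (s := Finset.univ) (fun i => p i ≤ q j)
    have e2 := Finset.card_filter_add_card_filter_not (s := Finset.univ) (fun i => q i ≤ q j)
    have e3 : ((Finset.univ.erase j).filter fun l => q j < q l) =
      (Finset.univ.filter fun l => q j < q l) := by
      ext l; simp; rintro h rfl; exact lt_irrefl _ h
    simp only [not_le] at e1 e2
    rw [e3]
    have a1 := h1 (q j); have a2 := h2 (q j)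
    have a3 := congrArg Finset.card (hq j)
    rw [Finset.card_insert_of_notMem (by simp)] at a3
    rw [hle] at e1 a2
    simp only [Finset.card_univ] at e1 e2
    omega
  set c : κ → ℝ := fun j => (∏ i, (q j - p i)) / ∏ l ∈ Finset.univ.erase j, (q j - q l) with hcdef
  have hcpos : ∀ j, 0 < c j := by
    intro j
    have s1 := sign_prod_sub Finset.univ p (q j) (fun i _ => hne i j)
    have s2 := sign_prod_sub (Finset.univ.erase j) q (q j)
      (fun l hl => fun h => (Finset.ne_of_mem_erase hl) (hinj h))
    rw [hcnt] at s1
    have := div_pos s1 s2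
    rwa [mul_div_mul_left _ _ (by positivity)] at this
  have hsub : ∀ j i, q j - p i ≠ 0 := fun j i => sub_ne_zero.2 (hne i j).symm
  have key : ∀ s : Finset ι, s.Nonempty → ∑ j, c j / ∏ i ∈ s, (q j - p i) = 0 := by
    intro s hs
    have hdeg : (∏ i ∈ sᶜ, (X - C (p i))).natDegree < Fintype.card κ - 1 := by
      rw [Polynomial.natDegree_prod_of_monic _ _ (fun i _ => monic_X_sub_C _)]
      simp
      rw [hc, Finset.card_compl]
      have := hs.card_pos
      have := Finset.card_le_univ s
      omega
    have := Lagrange.coeff_eq_sum (s := Finset.univ) (v := q) hinj.injOn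
      (P := ∏ i ∈ sᶜ, (X - C (p i))) (by
        refine Polynomial.degree_le_natDegree.trans_lt ?_
        rw [Finset.card_univ]; exact_mod_cast (by omega))
    rw [Polynomial.coeff_eq_zero_of_natDegree_lt (by simpa using hdeg)] at this
    rw [this]
    refine Finset.sum_congr rfl fun j _ => ?_
    rw [hcdef]
    simp only
    rw [← Finset.prod_mul_prod_compl s, Polynomial.eval_prod]
    have : ∏ i ∈ s, (q j - p i) ≠ 0 := Finset.prod_ne_zero_iff.2 fun i _ => hsub j i
    simp only [eval_sub, eval_X, eval_C]
    field_simp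
  have k1 : ∀ i, ∑ j, c j / (q j - p i) = 0 := by
    intro i; simpa using key {i} (by simp)
  have k2 : ∀ i i', i ≠ i' → ∑ j, c j / ((q j - p i) * (q j - p i')) = 0 := by
    intro i i' h; simpa [Finset.prod_pair h] using key {i, i'} (by simp)
  set d : ι → ℝ := fun i => ∑ j, c j / ((q j - p i) * (q j - p i)) with hd
  have hκ : Nonempty κ := by
    rw [← Fintype.card_pos_iff]; omega
  have hdpos : ∀ i, 0 < d i := by
    intro i
    refine Finset.sum_pos (fun j _ => div_pos (hcpos j) (mul_self_pos.2 (hsub j i))) Finset.univ_nonempty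
  have kk : ∀ i i', ∑ j, q j * (c j / ((q j - p i) * (q j - p i'))) =
      p i * ∑ j, (c j / ((q j - p i) * (q j - p i'))) := by
    intro i i'
    rw [← sub_eq_zero, Finset.mul_sum, ← Finset.sum_sub_distrib, ← k1 i']
    refine Finset.sum_congr rfl fun j _ => ?_
    have := hsub j i; have := hsub j i'
    field_simp
  have ent : ∀ j i i', (Real.sqrt (c j) / (Real.sqrt (d i) * (q j - p i))) *
      (Real.sqrt (c j) / (Real.sqrt (d i') * (q j - p i'))) =
      (Real.sqrt (d i) * Real.sqrt (d i'))⁻¹ * (c j / ((q j - p i) * (q j - p i'))) := by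
    intro j i i'
    have := Real.mul_self_sqrt (hcpos j).le
    have := hsub j i; have := hsub j i'
    have := Real.sqrt_pos.2 (hdpos i); have := Real.sqrt_pos.2 (hdpos i')
    field_simp
    rw [pow_two]; assumption
  refine ⟨Matrix.of fun j i => Real.sqrt (c j) / (Real.sqrt (d i) * (q j - p i)), ?_, ?_⟩
  · ext i i'
    simp only [Matrix.mul_apply, Matrix.transpose_apply, Matrix.of_apply, ent, ← Finset.mul_sum]
    by_cases h : i = i'
    · subst h
      rw [Matrix.one_apply_eq, Real.mul_self_sqrt (hdpos i).le]
      exact inv_mul_cancel₀ (hdpos i).ne'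
    · rw [k2 i i' h, Matrix.one_apply_ne h, mul_zero]
  · ext i i'
    rw [Matrix.mul_apply]
    simp only [Matrix.mul_diagonal, Matrix.transpose_apply, Matrix.of_apply]
    have : ∀ j, Real.sqrt (c j) / (Real.sqrt (d i) * (q j - p i)) * q j *
      (Real.sqrt (c j) / (Real.sqrt (d i') * (q j - p i'))) =
      (Real.sqrt (d i) * Real.sqrt (d i'))⁻¹ * (q j * (c j / ((q j - p i) * (q j - p i')))) := by
      intro j
      rw [mul_right_comm, ent]; ring
    simp only [this, ← Finset.mul_sum, kk]
    by_cases h : i = i'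
    · subst h
      rw [Matrix.diagonal_apply_eq, Real.mul_self_sqrt (hdpos i).le]
      change (d i)⁻¹ * (p i * d i) = p i
      have := (hdpos i).ne'
      field_simp
    · rw [k2 i i' h, Matrix.diagonal_apply_ne _ h, mul_zero, mul_zero]

theorem card_filter_ne (a : ι) (P : ι → Prop) [DecidablePred P] :
    (Finset.univ.filter fun i : {i // i ≠ a} => P i).card + (if P a then 1 else 0) =
    (Finset.univ.filter fun i => P i).card := by
  have : (Finset.univ.filter fun i : {i // i ≠ a} => P i).card =
      ((Finset.univ.filter fun i => P i).erase a).card := by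
    rw [← Finset.card_map (Function.Embedding.subtype _)]
    congr 1
    ext i; simp [and_comm]
  rw [this]
  split_ifs with h
  · exact Finset.card_erase_add_one (by simp [h])
  · rw [Finset.erase_eq_of_notMem (by simp [h]), add_zero]

theorem compr_one (n : ℕ) : ∀ (ι κ : Type) [Fintype ι] [Fintype κ] [DecidableEq ι] [DecidableEq κ]
    (p : ι → ℝ) (q : κ → ℝ) (_ : Fintype.card ι = n) (_ : Fintype.card κ = Fintype.card ι + 1)
    (_ : ∀ t, (Finset.univ.filter fun i => p i < t).card ≤ (Finset.univ.filter fun j => q j < t).card)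
    (_ : ∀ t, (Finset.univ.filter fun j => q j ≤ t).card ≤
      (Finset.univ.filter fun i => p i ≤ t).card + 1), Compr p q := by
  induction n with
  | zero =>
    intro ι κ _ _ _ _ p q hn hc h1 h2
    have := Fintype.card_eq_zero_iff.1 hn
    exact compr_strict p q hc (fun i => isEmptyElim i) h1 h2
  | succ n ih =>
    intro ι κ _ _ _ _ p q hn hc h1 h2
    by_cases hne : ∀ i j, p i ≠ q j
    · exact compr_strict p q hc hne h1 h2
    push Not at hne
    obtain ⟨a, b, hab⟩ := hne
    have hA : Compr (fun i : {i // i ≠ a} => p i) (fun j : {j // j ≠ b} => q j) := by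
      apply ih
      · simp [hn]
      · simp [hn, hc]
      · intro t
        have e1 := card_filter_ne a (fun i => p i < t)
        have e2 := card_filter_ne b (fun i => q i < t)
        have := h1 t
        rw [hab] at e1
        omega
      · intro t
        have e1 := card_filter_ne a (fun i => p i ≤ t)
        have e2 := card_filter_ne b (fun i => q i ≤ t)
        have := h2 t
        rw [hab] at e1
        omega
    have hB : Compr (fun i : {i // ¬ i ≠ a} => p i) (fun j : {j // ¬ j ≠ b} => q j) := by
      have : (fun i : {i // ¬ i ≠ a} => p i) =
        (fun j : {j // ¬ j ≠ b} => q j) ∘ (fun _ => ⟨b, by simp⟩) := by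
        ext ⟨i, hi⟩
        simp at hi
        subst hi
        simpa using hab
      rw [this]
      apply Compr.comp
      rintro ⟨x, hx⟩ ⟨y, hy⟩ _
      simp at hx hy
      simp [hx, hy]
    have hS := hA.sum hB
    have h3 := Compr.comp (Sum.elim (fun i : {i // i ≠ a} => p i) (fun i : {i // ¬ i ≠ a} => p i))
      (Equiv.sumCompl (fun i => i ≠ a)).symm (Equiv.injective _)
    have h4 := Compr.comp q (Equiv.sumCompl (fun i => i ≠ b)) (Equiv.injective _)
    have e3 : (Sum.elim (fun i : {i // i ≠ a} => p i) (fun i : {i // ¬ i ≠ a} => p i)) ∘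
      (Equiv.sumCompl (fun i => i ≠ a)).symm = p := by
      ext i
      by_cases hi : i = a
      · subst hi; simp [Equiv.sumCompl]
      · simp [Equiv.sumCompl, hi]
    have e4 : q ∘ (Equiv.sumCompl (fun i => i ≠ b)) =
      (Sum.elim (fun i : {i // i ≠ b} => q i) (fun i : {i // ¬ i ≠ b} => q i)) := by
      ext (i | i) <;> simp
    rw [e3] at h3
    rw [e4] at h4
    exact (h3.trans hS).trans h4
end compr

theorem compr_sorted (d k : ℕ) : ∀ (p : Fin k → ℝ) (q : Fin (k + d) → ℝ), Monotone p → Monotone q →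
    (∀ i : Fin k, q ⟨i, by omega⟩ ≤ p i) → (∀ i : Fin k, p i ≤ q ⟨i + d, by omega⟩) → Compr p q := by
  induction d with
  | zero =>
    intro p q hp hq h1 h2
    have : p = q ∘ id := by
      ext i; exact le_antisymm (h2 i) (h1 i)
    rw [this]
    exact Compr.comp q id Function.injective_id
  | succ d ih =>
    intro p q hp hq h1 h2
    set q' : Fin (k + d) → ℝ := fun i => if h : (i : ℕ) < k then min (q ⟨i + 1, by omega⟩) (p ⟨i, h⟩)
      else q ⟨i + 1, by omega⟩ with hq'
    have hle : ∀ i, q' i ≤ q ⟨i + 1, by omega⟩ := by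
      intro i; rw [hq']; simp only; split_ifs
      · exact min_le_left _ _
      · exact le_rfl
    have hge : ∀ i : Fin (k + d), q ⟨i, by omega⟩ ≤ q' i := by
      intro i; rw [hq']; simp only; split_ifs with h
      · exact le_min (hq (by simp [Fin.le_def])) (h1 ⟨i, h⟩)
      · exact hq (by simp [Fin.le_def])
    have hA : Compr p q' := by
      apply ih p q' hp
      · intro i j hij
        have hij' : (i : ℕ) ≤ j := hij
        by_cases hj : (j : ℕ) < k
        · have hi : (i : ℕ) < k := by omega
          simp only [hq', hi, hj, dif_pos]
          exact min_le_min (hq (Fin.mk_le_mk.2 (by omega))) (hp (Fin.mk_le_mk.2 (by omega)))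
        · refine (hle i).trans ?_
          simp only [hq', hj, dif_neg, not_false_iff]
          exact hq (Fin.mk_le_mk.2 (by omega))
      · intro i
        simp only [hq', i.2, dif_pos]
        exact min_le_right _ _
      · intro i
        simp only [hq']
        split_ifs with h
        · exact le_min (h2 i) (hp (by simp [Fin.le_def]))
        · exact h2 i
    refine hA.trans (compr_one (k + d) (Fin (k + d)) (Fin (k + d + 1)) q' q (by simp) (by simp) ?_ ?_)
    · intro t
      refine Finset.card_le_card_of_injOn Fin.castSucc ?_ (Fin.castSucc_injective _).injOn
      intro i hi
      simp at hi ⊢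
      exact (hge i).trans_lt hi
    · intro t
      refine (Finset.card_le_card (t := insert 0 ((Finset.univ.filter fun i => q' i ≤ t).image Fin.succ))
        ?_).trans ((Finset.card_insert_le _ _).trans ?_)
      · intro j hj
        simp at hj ⊢
        rcases Fin.eq_zero_or_eq_succ j with h | ⟨i, rfl⟩
        · exact Or.inl h
        · exact Or.inr ⟨i, (hle i).trans hj, rfl⟩
      · gcongr
        exact Finset.card_image_le

theorem exists_between_notMem (F : Set ℝ) (hF : F.Finite) {a b : ℝ} (h : a < b) :
    ∃ t, a < t ∧ t < b ∧ t ∉ F := by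
  obtain ⟨t, ht, htF⟩ := ((Set.Ioo_infinite h).sdiff hF).nonempty
  exact ⟨t, ht.1, ht.2, htF⟩

theorem compr_count_fin (k m : ℕ) (p : Fin k → ℝ) (q : Fin m → ℝ) (hp : Monotone p) (hq : Monotone q)
    (F : Set ℝ) (hF : F.Finite)
    (h1 : ∀ t ∉ F, (Finset.univ.filter fun i => p i < t).card ≤
      (Finset.univ.filter fun j => q j < t).card)
    (h2 : ∀ t ∉ F, (Finset.univ.filter fun i => t < p i).card ≤
      (Finset.univ.filter fun j => t < q j).card) : Compr p q := by
  have hkm : k ≤ m := by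
    obtain ⟨u, hu⟩ := (Set.finite_range p).bddAbove
    obtain ⟨t, ht1, ht2, ht3⟩ := exists_between_notMem F hF (lt_add_one u)
    have := h1 t ht3
    rw [Finset.filter_true_of_mem (fun i _ => (hu ⟨i, rfl⟩).trans_lt ht1)] at this
    have h := this.trans (Finset.card_filter_le _ _)
    simpa using h
  obtain ⟨d, rfl⟩ := Nat.exists_eq_add_of_le hkm
  refine compr_sorted d k p q hp hq ?_ ?_
  · intro i
    by_contra! hlt
    obtain ⟨t, ht1, ht2, ht3⟩ := exists_between_notMem F hF hlt
    have a1 : (Finset.Iic i).card ≤ (Finset.univ.filter fun i => p i < t).card :=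
      Finset.card_le_card fun j hj => by
        simp at hj ⊢; exact (hp hj).trans_lt ht1
    have a2 : (Finset.univ.filter fun j => q j < t).card ≤
        (Finset.Iio (⟨i, by omega⟩ : Fin (k + d))).card :=
      Finset.card_le_card fun j hj => by
        simp at hj ⊢
        by_contra! hji
        exact absurd ((hq hji).trans_lt hj) (not_lt.2 ht2.le)
    have := h1 t ht3
    simp at a1 a2
    omega
  · intro i
    by_contra! hlt
    obtain ⟨t, ht1, ht2, ht3⟩ := exists_between_notMem F hF hlt
    have a1 : (Finset.Ici i).card ≤ (Finset.univ.filter fun i => t < p i).card :=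
      Finset.card_le_card fun j hj => by
        simp at hj ⊢; exact ht2.trans_le (hp hj)
    have a2 : (Finset.univ.filter fun j => t < q j).card ≤
        (Finset.Ioi (⟨i + d, by omega⟩ : Fin (k + d))).card :=
      Finset.card_le_card fun j hj => by
        simp at hj ⊢
        by_contra! hji
        exact absurd (hj.trans_le (hq hji)) (not_lt.2 ht1.le)
    have := h2 t ht3
    simp at a1 a2
    omega

theorem exists_sort {ι : Type} [Fintype ι] (p : ι → ℝ) :
    ∃ e : Fin (Fintype.card ι) ≃ ι, Monotone (p ∘ e) :=
  ⟨(Tuple.sort (p ∘ (Fintype.equivFin ι).symm)).trans (Fintype.equivFin ι).symm,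
    Tuple.monotone_sort (p ∘ (Fintype.equivFin ι).symm)⟩

theorem card_filter_equiv {ι κ : Type} [Fintype ι] [Fintype κ] (e : ι ≃ κ) (P : κ → Prop)
    [DecidablePred P] : (Finset.univ.filter fun i => P (e i)).card = (Finset.univ.filter P).card := by
  rw [← Finset.card_map e.toEmbedding]
  congr 1
  ext j
  simp

theorem compr_count {ι κ : Type} [Fintype ι] [Fintype κ] [DecidableEq ι] [DecidableEq κ]
    (p : ι → ℝ) (q : κ → ℝ) (F : Set ℝ) (hF : F.Finite)
    (h1 : ∀ t ∉ F, (Finset.univ.filter fun i => p i < t).card ≤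
      (Finset.univ.filter fun j => q j < t).card)
    (h2 : ∀ t ∉ F, (Finset.univ.filter fun i => t < p i).card ≤
      (Finset.univ.filter fun j => t < q j).card) : Compr p q := by
  obtain ⟨e, he⟩ := exists_sort p
  obtain ⟨f, hf⟩ := exists_sort q
  have h := compr_count_fin _ _ (p ∘ e) (q ∘ f) he hf F hF
    (fun t ht => by
      simp only [Function.comp]
      rw [card_filter_equiv e (fun x => p x < t), card_filter_equiv f (fun x => q x < t)]
      exact h1 t ht)
    (fun t ht => by
      simp only [Function.comp]
      rw [card_filter_equiv e (fun x => t < p x), card_filter_equiv f (fun x => t < q x)]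
      exact h2 t ht)
  have h3 := Compr.comp (p ∘ e) e.symm e.symm.injective
  have e3 : (p ∘ e) ∘ e.symm = p := by ext; simp
  rw [e3] at h3
  exact (h3.trans h).trans (Compr.comp q f f.injective)


section geom
set_option linter.unusedSectionVars false
variable {E : Type} [NormedAddCommGroup E] [InnerProductSpace ℂ E] [FiniteDimensional ℂ E]

def PDef (A : E →ₗ[ℂ] E) (w : ℂ) (S : Submodule ℂ E) : Prop :=
  ∀ x ∈ S, x ≠ 0 → 0 < (w * inner ℂ x (A x)).re

def Isotr (A : E →ₗ[ℂ] E) (V : Submodule ℂ E) : Prop :=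
  ∀ x ∈ V, ∀ y ∈ V, inner ℂ y (A x) = 0

def Pencil (A : E →ₗ[ℂ] E) (W : Submodule ℂ E) (v : E) : Prop :=
  v ∈ W ∧ v ≠ 0 ∧ ∃ (u : E) (γ δ : ℂ), (γ ≠ 0 ∨ δ ≠ 0) ∧
    ∀ y ∈ W, inner ℂ y (A v) = γ * inner ℂ y u ∧ inner ℂ (A y) v = δ * inner ℂ y u

theorem exists_pencil (A : E →ₗ[ℂ] E) (W : Submodule ℂ E) (hW : W ≠ ⊥) : ∃ v, Pencil A W v := by
  have : Nontrivial W := Submodule.nontrivial_iff_ne_bot.2 hW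
  let f : W →ₗ[ℂ] W := W.orthogonalProjectionOnto.toLinearMap ∘ₗ A ∘ₗ W.subtype
  let g : W →ₗ[ℂ] W := W.orthogonalProjectionOnto.toLinearMap ∘ₗ (LinearMap.adjoint A) ∘ₗ W.subtype
  have hf : ∀ (x : W) (y : E) (hy : y ∈ W), inner ℂ (⟨y, hy⟩ : W) (f x) = inner ℂ y (A x) := by
    intro x y hy
    exact Submodule.inner_orthogonalProjectionOnto_eq_of_mem_left (⟨y, hy⟩ : W) (A x)
  have hg : ∀ (x : W) (y : E) (hy : y ∈ W), inner ℂ (⟨y, hy⟩ : W) (g x) = inner ℂ (A y) (x : E) := by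
    intro x y hy
    rw [← LinearMap.adjoint_inner_right]
    exact Submodule.inner_orthogonalProjectionOnto_eq_of_mem_left (⟨y, hy⟩ : W) (LinearMap.adjoint A x)
  by_cases hinj : Function.Injective f
  · let e := LinearEquiv.ofInjectiveEndo f hinj
    obtain ⟨μ, hμ⟩ := Module.End.exists_eigenvalue (e.symm.toLinearMap ∘ₗ g : Module.End ℂ W)
    obtain ⟨v, hv⟩ := hμ.exists_hasEigenvector
    have h1 : g v = μ • f v := by
      have := hv.apply_eq_smul
      have h2 := congrArg e this
      simpa [e] using h2
    refine ⟨v, v.2, by simpa using hv.2, A v, 1, μ, Or.inl one_ne_zero, fun y hy => ⟨by simp, ?_⟩⟩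
    rw [← hg v y hy, h1, inner_smul_right, hf]
  · rw [← LinearMap.ker_eq_bot, Submodule.eq_bot_iff] at hinj
    push Not at hinj
    obtain ⟨v, hv, hv0⟩ := hinj
    refine ⟨v, v.2, by simpa using hv0, LinearMap.adjoint A v, 0, 1, Or.inr one_ne_zero, fun y hy => ⟨?_, ?_⟩⟩
    · rw [← hf v y hy, LinearMap.mem_ker.1 hv]; simp
    · rw [LinearMap.adjoint_inner_right]; simp

theorem bound_form (A : E →ₗ[ℂ] E) : ∃ C : ℝ, 0 ≤ C ∧ ∀ x y, ‖inner ℂ x (A y)‖ ≤ C * ‖x‖ * ‖y‖ := by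
  refine ⟨‖A.toContinuousLinearMap‖, norm_nonneg _, fun x y => ?_⟩
  refine (norm_inner_le_norm _ _).trans ?_
  have := A.toContinuousLinearMap.le_opNorm y
  simp only [LinearMap.coe_toContinuousLinearMap'] at this
  nlinarith [norm_nonneg x]

theorem PDef.quant {A : E →ₗ[ℂ] E} {w : ℂ} {S : Submodule ℂ E} (h : PDef A w S) :
    ∃ δ : ℝ, 0 < δ ∧ ∀ x ∈ S, δ * ‖x‖ ^ 2 ≤ (w * inner ℂ x (A x)).re := by
  have hcont : Continuous fun x : S => (w * inner ℂ (x : E) (A x)).re := by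
    have : Continuous fun x : E => A x := A.continuous_of_finiteDimensional
    fun_prop
  have hc : IsCompact (Metric.sphere (0 : S) 1) := isCompact_sphere _ _
  rcases (Metric.sphere (0 : S) 1).eq_empty_or_nonempty with he | hne
  · refine ⟨1, one_pos, fun x hx => ?_⟩
    by_cases hx0 : x = 0
    · simp [hx0]
    · exfalso
      have : ((‖x‖⁻¹ : ℂ) • (⟨x, hx⟩ : S)) ∈ Metric.sphere (0 : S) 1 := by
        have := norm_ne_zero_iff.2 hx0
        simp [norm_smul, this]
      rw [he] at this
      exact this
  · obtain ⟨x0, hx0, hmin⟩ := hc.exists_isMinOn hne hcont.continuousOn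
    refine ⟨_, h x0 x0.2 ?_, fun x hx => ?_⟩
    · rintro h0
      have : ‖x0‖ = 1 := by simpa using hx0
      rw [Submodule.coe_norm, h0] at this
      simp at this
    by_cases hx0 : x = 0
    · simp [hx0]
    have hn := norm_ne_zero_iff.2 hx0
    have : ((‖x‖⁻¹ : ℂ) • (⟨x, hx⟩ : S)) ∈ Metric.sphere (0 : S) 1 := by
      simp [norm_smul, hn]
    have h3 := hmin this
    simp only [Set.mem_ofPred_eq, Submodule.coe_smul, map_smul, inner_smul_left, inner_smul_right] at h3
    have h4 : (w * ((‖x‖⁻¹ : ℂ) * ((starRingEnd ℂ) (‖x‖⁻¹ : ℂ) * inner ℂ x (A x)))).re =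
      (‖x‖⁻¹) ^ 2 * (w * inner ℂ x (A x)).re := by
      have : (w * ((‖x‖⁻¹ : ℂ) * ((starRingEnd ℂ) (‖x‖⁻¹ : ℂ) * inner ℂ x (A x)))) =
        (((‖x‖⁻¹) ^ 2 : ℝ) : ℂ) * (w * inner ℂ x (A x)) := by
        rw [← Complex.ofReal_inv, Complex.conj_ofReal]; push_cast; ring
      rw [this, Complex.re_ofReal_mul]
    rw [inv_pow] at h4
    have h5 : (w * inner ℂ (x0 : E) (A x0)).re ≤ (‖x‖ ^ 2)⁻¹ * (w * inner ℂ x (A x)).re := by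
      rw [← h4]; exact h3
    have : 0 < ‖x‖ ^ 2 := by positivity
    rw [inv_mul_eq_div, le_div_iff₀ this] at h5
    exact h5

theorem PDef.perturb {A : E →ₗ[ℂ] E} {w : ℂ} {S : Submodule ℂ E} (h : PDef A w S) (w1 : ℂ) :
    ∃ ε : ℝ, 0 < ε ∧ PDef A (w + ε * w1) S := by
  obtain ⟨δ, hδ, hq⟩ := h.quant
  obtain ⟨C, hC, hb⟩ := bound_form A
  have hpos : 0 < ‖w1‖ * C + 1 := by positivity
  refine ⟨δ / (‖w1‖ * C + 1), by positivity, fun x hx hx0 => ?_⟩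
  set ε := δ / (‖w1‖ * C + 1) with hε
  have hε0 : 0 < ε := by positivity
  have hεδ : ε * (‖w1‖ * C + 1) = δ := by rw [hε]; field_simp
  have h1 := hq x hx
  have h2 : -(‖w1‖ * (C * ‖x‖ * ‖x‖)) ≤ (w1 * inner ℂ x (A x)).re := by
    have := (abs_le.1 (Complex.abs_re_le_norm (w1 * inner ℂ x (A x)))).1
    rw [norm_mul] at this
    have h3 := mul_le_mul_of_nonneg_left (hb x x) (norm_nonneg w1)
    linarith
  have h3 : ((w + ε * w1) * inner ℂ x (A x)).re =
      (w * inner ℂ x (A x)).re + ε * (w1 * inner ℂ x (A x)).re := by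
    rw [add_mul, Complex.add_re, mul_assoc, Complex.re_ofReal_mul]
  rw [h3]
  have hx2 : 0 < ‖x‖ ^ 2 := by have := norm_pos_iff.2 hx0; positivity
  have h4 := mul_le_mul_of_nonneg_left h2 hε0.le
  have h5 : ε * ‖w1‖ * C * ‖x‖ ^ 2 + ε * ‖x‖ ^ 2 = δ * ‖x‖ ^ 2 := by rw [← hεδ]; ring
  have h6 := mul_pos hε0 hx2
  nlinarith

/-- the polarised hermitian form -/
noncomputable def hform (A : E →ₗ[ℂ] E) (w : ℂ) (y x : E) : ℂ :=
  w * inner ℂ y (A x) + (starRingEnd ℂ) w * inner ℂ (A y) x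

theorem re_expand (A : E →ₗ[ℂ] E) (w l : ℂ) (s x : E) :
    (w * inner ℂ (s + l • x) (A (s + l • x))).re = (w * inner ℂ s (A s)).re +
      (l * hform A w s x).re + ‖l‖ ^ 2 * (w * inner ℂ x (A x)).re := by
  have e1 : (w * ((starRingEnd ℂ) l * inner ℂ x (A s))).re =
      (l * ((starRingEnd ℂ) w * inner ℂ (A s) x)).re := by
    rw [← Complex.conj_re]
    simp only [map_mul, inner_conj_symm, Complex.conj_conj]
    congr 1; ring
  have e2 : (w * (l * ((starRingEnd ℂ) l * inner ℂ x (A x)))).re =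
      ‖l‖ ^ 2 * (w * inner ℂ x (A x)).re := by
    have : (w * (l * ((starRingEnd ℂ) l * inner ℂ x (A x)))) =
      ((‖l‖ ^ 2 : ℝ) : ℂ) * (w * inner ℂ x (A x)) := by
      push_cast
      rw [← Complex.mul_conj']; ring
    rw [this, Complex.re_ofReal_mul]
  simp only [hform, map_add, map_smul, inner_add_left, inner_add_right, inner_smul_left,
    inner_smul_right, mul_add, Complex.add_re]
  rw [e1, e2, ← mul_assoc w l, mul_comm w l, mul_assoc l w]
  ring

theorem PDef.sup {A : E →ₗ[ℂ] E} {w : ℂ} {S : Submodule ℂ E} (x : E) {δ M : ℝ} (hδ : 0 < δ)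
    (hq : ∀ s ∈ S, δ * ‖s‖ ^ 2 ≤ (w * inner ℂ s (A s)).re)
    (hM : ∀ s ∈ S, ‖hform A w s x‖ ≤ M * ‖s‖)
    (hx : M ^ 2 < 4 * δ * (w * inner ℂ x (A x)).re) : PDef A w (S ⊔ Submodule.span ℂ {x}) := by
  intro y hy hy0
  obtain ⟨s, hs, x', hx', rfl⟩ := Submodule.mem_sup.1 hy
  obtain ⟨l, rfl⟩ := Submodule.mem_span_singleton.1 hx'
  rw [re_expand]
  set Q := (w * inner ℂ x (A x)).re
  have hQ : 0 < Q := by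
    by_contra! h
    nlinarith [sq_nonneg M]
  have h1 := hq s hs
  have h2 : -(‖l‖ * (M * ‖s‖)) ≤ (l * hform A w s x).re := by
    have := (abs_le.1 (Complex.abs_re_le_norm (l * hform A w s x))).1
    rw [norm_mul] at this
    have h3 := mul_le_mul_of_nonneg_left (hM s hs) (norm_nonneg l)
    linarith
  by_cases hl : l = 0
  · subst hl
    have hs0 : s ≠ 0 := by simpa using hy0
    have := norm_pos_iff.2 hs0
    have : 0 < δ * ‖s‖ ^ 2 := by positivity
    simp only [zero_mul, Complex.zero_re, norm_zero, add_zero, ne_eq, OfNat.ofNat_ne_zero,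
      not_false_eq_true, zero_pow]
    linarith
  · have hl' := norm_pos_iff.2 hl
    have h4 : 0 < (4 * δ * Q - M ^ 2) * ‖l‖ ^ 2 := by
      have : 0 < 4 * δ * Q - M ^ 2 := by linarith
      positivity
    have h5 : 0 < 4 * δ * (δ * ‖s‖ ^ 2 - ‖l‖ * (M * ‖s‖) + ‖l‖ ^ 2 * Q) := by
      nlinarith [sq_nonneg (2 * δ * ‖s‖ - M * ‖l‖)]
    have h6 := pos_of_mul_pos_right h5 (by positivity)
    linarith

theorem PDef.extend {A : E →ₗ[ℂ] E} {w : ℂ} {S : Submodule ℂ E} (h : PDef A w S) (v y0 : E)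
    (hv : inner ℂ v (A v) = 0) (hS : ∀ s ∈ S, hform A w s v = 0) (hy : hform A w y0 v ≠ 0) :
    ∃ t : ℂ, PDef A w (S ⊔ Submodule.span ℂ {y0 + t • v}) := by
  obtain ⟨δ, hδ, hq⟩ := h.quant
  obtain ⟨C, hC, hb⟩ := bound_form A
  set M := 2 * ‖w‖ * C * ‖y0‖
  set R : ℝ := (M ^ 2 + 1) / (4 * δ) - (w * inner ℂ y0 (A y0)).re
  refine ⟨R / hform A w y0 v, PDef.sup (M := M) _ hδ hq ?_ ?_⟩
  · intro s hs
    have : hform A w s (y0 + ((R : ℂ) / hform A w y0 v) • v) =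
        hform A w s y0 + ((R : ℂ) / hform A w y0 v) * hform A w s v := by
      simp only [hform, map_add, map_smul, inner_add_right, inner_smul_right]; ring
    rw [this, hS s hs, mul_zero, add_zero, hform]
    refine (norm_add_le _ _).trans ?_
    rw [norm_mul, norm_mul, RCLike.norm_conj, ← inner_conj_symm (A s) y0, RCLike.norm_conj]
    have h1 := mul_le_mul_of_nonneg_left (hb s y0) (norm_nonneg w)
    have h2 := mul_le_mul_of_nonneg_left (hb y0 s) (norm_nonneg w)
    simp only [M]
    nlinarith
  · rw [re_expand, hv, div_mul_cancel₀ _ hy]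
    simp only [mul_zero, Complex.zero_re, add_zero, Complex.ofReal_re, R]
    field_simp
    linarith

theorem finrank_hyper (W : Submodule ℂ E) (u : E) :
    Module.finrank ℂ W ≤ Module.finrank ℂ (W ⊓ (Submodule.span ℂ {u})ᗮ : Submodule ℂ E) + 1 := by
  have h1 := Submodule.finrank_sup_add_finrank_inf_eq W (Submodule.span ℂ {u})ᗮ
  have h2 := Submodule.finrank_add_finrank_orthogonal (Submodule.span ℂ {u})
  have h3 := finrank_span_le_card (R := ℂ) ({u} : Set E)
  have h4 := Submodule.finrank_le (W ⊔ (Submodule.span ℂ {u})ᗮ)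
  simp at h3
  omega

theorem Isotr.sup {A : E →ₗ[ℂ] E} {V : Submodule ℂ E} (h : Isotr A V) (v : E)
    (hv : inner ℂ v (A v) = 0) (h1 : ∀ y ∈ V, inner ℂ y (A v) = 0) (h2 : ∀ y ∈ V, inner ℂ (A y) v = 0) :
    Isotr A (V ⊔ Submodule.span ℂ {v}) := by
  intro x hx0 y hy0
  obtain ⟨x, hx, x', hx', rfl⟩ := Submodule.mem_sup.1 hx0
  obtain ⟨l, rfl⟩ := Submodule.mem_span_singleton.1 hx'
  obtain ⟨y, hy, y', hy', rfl⟩ := Submodule.mem_sup.1 hy0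
  obtain ⟨m, rfl⟩ := Submodule.mem_span_singleton.1 hy'
  have h3 : inner ℂ v (A x) = 0 := by rw [← inner_conj_symm, h2 x hx, map_zero]
  simp only [map_add, map_smul, inner_add_left, inner_add_right, inner_smul_left,
    inner_smul_right, h x hx y hy, h1 y hy, h3, hv]
  simp

theorem diag_or_isotr (A : E →ₗ[ℂ] E) (m : ℕ) : ∀ W : Submodule ℂ E, Module.finrank ℂ W = m →
    (∃ v, Pencil A W v ∧ inner ℂ v (A v) = 0) ∨
    (∃ b : Fin m → E, (∀ i, b i ∈ W) ∧ (∀ i, inner ℂ (b i) (A (b i)) ≠ 0) ∧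
      ∀ i j, i ≠ j → inner ℂ (b i) (A (b j)) = 0) := by
  induction m with
  | zero => 
    intro W hW
    exact Or.inr ⟨Fin.elim0, fun i => i.elim0, fun i => i.elim0, fun i => i.elim0⟩
  | succ m ih =>
    intro W hW
    obtain ⟨v, hv⟩ := exists_pencil A W (by rintro rfl; simp at hW)
    by_cases hvA : inner ℂ v (A v) = 0
    · exact Or.inl ⟨v, hv, hvA⟩
    obtain ⟨hvW, hv0, u, γ, δ, hγδ, hu⟩ := hv
    set W1 := W ⊓ (Submodule.span ℂ {u})ᗮ with hW1
    have hvu : inner ℂ v u ≠ 0 := by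
      intro h
      apply hvA
      rw [(hu v hvW).1, h, mul_zero]
    have hvW1 : v ∉ W1 := fun h =>
      hvu ((Submodule.mem_orthogonal_singleton_iff_inner_left).1 h.2)
    have hlt : Module.finrank ℂ W1 < Module.finrank ℂ W :=
      Submodule.finrank_lt_finrank_of_lt (lt_of_le_of_ne inf_le_left (fun h => hvW1 (h ▸ hvW)))
    have hge := finrank_hyper W u
    rw [← hW1] at hge
    have hz1 : ∀ y ∈ W1, inner ℂ y (A v) = 0 := fun y hy => by
      rw [(hu y hy.1).1, (Submodule.mem_orthogonal_singleton_iff_inner_left).1 hy.2, mul_zero]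
    have hz2 : ∀ y ∈ W1, inner ℂ (A y) v = 0 := fun y hy => by
      rw [(hu y hy.1).2, (Submodule.mem_orthogonal_singleton_iff_inner_left).1 hy.2, mul_zero]
    have hz3 : ∀ y ∈ W1, inner ℂ v (A y) = 0 := fun y hy => by
      rw [← inner_conj_symm, hz2 y hy, map_zero]
    have hz4 : ∀ y ∈ W1, inner ℂ (A v) y = 0 := fun y hy => by
      rw [← inner_conj_symm, hz1 y hy, map_zero]
    rcases ih W1 (by omega) with ⟨v', ⟨hv'W, hv'0, u', γ', δ', hγδ', hu'⟩, hv'A⟩ | ⟨b, hb1, hb2, hb3⟩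
    · left
      -- replace the second vector by a vector with the correct pairing with v
      have hdec : ∀ y ∈ W, y - ((starRingEnd ℂ) (inner ℂ y u / inner ℂ v u)) • v ∈ W1 := by
        intro y hy
        refine ⟨W.sub_mem hy (W.smul_mem _ hvW), ?_⟩
        rw [SetLike.mem_coe, Submodule.mem_orthogonal_singleton_iff_inner_left]
        rw [inner_sub_left, inner_smul_left, Complex.conj_conj, div_mul_cancel₀ _ hvu, sub_self]
      refine ⟨v', ⟨hv'W.1, hv'0, u' - (inner ℂ v u' / inner ℂ v u) • u, γ', δ', hγδ', ?_⟩, hv'A⟩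
      intro y hy
      have h := hu' _ (hdec y hy)
      simp only [map_sub, map_smul, inner_sub_left, inner_smul_left, hz3 v' hv'W, hz4 v' hv'W,
        mul_zero, sub_zero, Complex.conj_conj] at h
      rw [h.1, h.2, inner_sub_right, inner_smul_right]
      constructor <;> ring
    · right
      refine ⟨Fin.cons v b, ?_, ?_, ?_⟩
      · intro i
        refine Fin.cases ?_ (fun i => ?_) i
        · exact hvW
        · exact (hb1 i).1
      · intro i
        refine Fin.cases ?_ (fun i => ?_) i
        · exact hvA
        · exact hb2 i
      · intro i j
        refine Fin.cases ?_ (fun i => ?_) i <;> refine Fin.cases ?_ (fun j => ?_) j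
        · simp
        · intro _; exact hz3 _ (hb1 j)
        · intro _; exact hz1 _ (hb1 i)
        · intro h; exact hb3 i j (by simpa using h)

theorem finrank_range_comb {ι : Type} [Fintype ι] (b : ι → E) (ψ : ι → E →ₗ[ℂ] ℂ)
    (h1 : ∀ i, ψ i (b i) ≠ 0) (h2 : ∀ i j, i ≠ j → ψ i (b j) = 0) :
    Module.finrank ℂ (LinearMap.range (Fintype.linearCombination ℂ b)) = Fintype.card ι := by
  classical
  rw [LinearMap.finrank_range_of_inj, Module.finrank_fintype_fun_eq_card]
  rw [← LinearMap.ker_eq_bot, Submodule.eq_bot_iff]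
  intro c hc
  ext i
  have h := congrArg (ψ i) (LinearMap.mem_ker.1 hc)
  rw [Fintype.linearCombination_apply, map_sum, Finset.sum_eq_single i] at h
  · simpa [h1 i] using h
  · intro j _ hj; rw [map_smul, h2 i j hj.symm, smul_zero]
  · simp

theorem comb_inner {ι : Type} [Fintype ι] (A : E →ₗ[ℂ] E) (b : ι → E)
    (hb : ∀ i j, i ≠ j → inner ℂ (b i) (A (b j)) = 0) (c : ι → ℂ) :
    inner ℂ (∑ i, c i • b i) (A (∑ i, c i • b i)) =
      ∑ i, ((‖c i‖ ^ 2 : ℝ) : ℂ) * inner ℂ (b i) (A (b i)) := by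
  classical
  rw [map_sum, sum_inner]
  refine Finset.sum_congr rfl fun i _ => ?_
  rw [inner_sum, Finset.sum_eq_single i]
  · rw [map_smul, inner_smul_left, inner_smul_right]
    push_cast
    rw [← Complex.mul_conj']; ring
  · intro j _ hj
    rw [map_smul, inner_smul_left, inner_smul_right, hb i j hj.symm]; simp
  · simp

theorem card_filter_subtype' {ι : Type} [Fintype ι] (P Q : ι → Prop) [DecidablePred P]
    [DecidablePred Q] : (Finset.univ.filter fun i : {i // P i} => Q i).card =
      (Finset.univ.filter fun i => P i ∧ Q i).card := by
  classical
  rw [← Finset.card_map (Function.Embedding.subtype _)]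
  congr 1
  ext i; simp [and_comm]

theorem diag_count {ι : Type} [Fintype ι] (z : ι → ℂ) (hz : ∀ i, z i ≠ 0) :
    ∃ w0 : ℂ, (∀ i, (w0 * z i).re ≠ 0) ∧
      ∀ w : ℂ, (∀ i, (w * z i).re ≠ 0) → (Finset.univ.filter fun i => 0 < (w * z i).re).card ≤
        (Finset.univ.filter fun i => 0 < (w0 * z i).re).card := by
  classical
  let K : Set ℕ := {k | ∃ w : ℂ, (∀ i, (w * z i).re ≠ 0) ∧
    (Finset.univ.filter fun i => 0 < (w * z i).re).card = k}
  have hK : K.Nonempty := by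
    have hfin : (⋃ i, {t : ℝ | (z i).re + t * (z i).im = 0}).Finite := by
      refine Set.finite_iUnion fun i => Set.Subsingleton.finite ?_
      intro s hs t ht
      simp only [Set.mem_ofPred_eq] at hs ht
      have him : (z i).im ≠ 0 := by
        intro h
        rw [h] at hs
        exact hz i (Complex.ext (by simpa using hs) h)
      have : (s - t) * (z i).im = 0 := by linarith
      rcases mul_eq_zero.1 this with h | h
      · linarith
      · exact absurd h him
    obtain ⟨t, -, ht⟩ := (Set.infinite_univ.sdiff hfin).nonempty
    refine ⟨_, 1 - t * Complex.I, fun i h => ht ?_, rfl⟩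
    simp only [Set.mem_iUnion, Set.mem_ofPred_eq]
    exact ⟨i, by simpa using h⟩
  have hb : BddAbove K := ⟨Fintype.card ι, by
    rintro k ⟨w, -, rfl⟩
    exact Finset.card_le_univ _⟩
  obtain ⟨w0, h0, h1⟩ := Nat.sSup_mem hK hb
  refine ⟨w0, h0, fun w hw => ?_⟩
  rw [h1]
  exact le_csSup hb ⟨w, hw, rfl⟩

theorem diag_iso {ι : Type} [Fintype ι] (A : E →ₗ[ℂ] E) (W : Submodule ℂ E) (b : ι → E)
    (hbW : ∀ i, b i ∈ W) (hb0 : ∀ i, inner ℂ (b i) (A (b i)) ≠ 0)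
    (hb : ∀ i j, i ≠ j → inner ℂ (b i) (A (b j)) = 0) (r : ℕ)
    (hr : ∀ (w : ℂ) (S : Submodule ℂ E), S ≤ W → PDef A w S → Module.finrank ℂ S ≤ r) :
    ∃ V ≤ W, Isotr A V ∧ Fintype.card ι ≤ Module.finrank ℂ V + r := by
  classical
  set z : ι → ℂ := fun i => inner ℂ (b i) (A (b i)) with hz
  obtain ⟨w0, hw0, hmax⟩ := diag_count z hb0
  set a : ι → ℝ := fun i => (w0 * z i).re with ha
  set t : ι → ℝ := fun i => (w0 * z i).im / a i with ht
  -- the positive part has at most `r` elements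
  have hM : (Finset.univ.filter fun i => 0 < a i).card ≤ r := by
    set b' : {i // 0 < a i} → E := fun i => b i
    have hf := finrank_range_comb b' (fun i => (innerₛₗ ℂ (b' i)) ∘ₗ A)
      (fun i => hb0 i) (fun i j hij => hb i j (fun h => hij (Subtype.ext h)))
    rw [← Fintype.card_subtype, ← hf]
    refine hr w0 _ ?_ ?_
    · rintro _ ⟨c, rfl⟩
      rw [Fintype.linearCombination_apply]
      exact W.sum_mem fun i _ => W.smul_mem _ (hbW i)
    · rintro _ ⟨c, rfl⟩ hx
      rw [Fintype.linearCombination_apply] at hx ⊢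
      rw [comb_inner A b' (fun i j hij => hb i j (fun h => hij (Subtype.ext h))), Finset.mul_sum,
        Complex.re_sum]
      have hterm : ∀ i : {i // 0 < a i}, (w0 * (((‖c i‖ ^ 2 : ℝ) : ℂ) * inner ℂ (b' i) (A (b' i)))).re
          = ‖c i‖ ^ 2 * a i := by
        intro i
        rw [mul_left_comm, Complex.re_ofReal_mul]
      simp only [hterm]
      obtain ⟨i, hi⟩ : ∃ i, c i ≠ 0 := by
        by_contra! h
        exact hx (by simp [h])
      refine Finset.sum_pos' (fun i _ => mul_nonneg (sq_nonneg _) i.2.le) ⟨i, Finset.mem_univ _, ?_⟩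
      have := norm_pos_iff.2 hi
      exact mul_pos (by positivity) i.2
  have hre : ∀ (x : ℝ) i, (w0 * (-x - Complex.I) * z i).re = a i * (t i - x) := by
    intro x i
    have : w0 * (-x - Complex.I) * z i = (-x - Complex.I) * (w0 * z i) := by ring
    rw [this, ht]
    have := hw0 i
    simp only [ha] at *
    rw [mul_sub, mul_div_cancel₀ _ this]
    simp [Complex.mul_re]
    ring
  have hsplit : ∀ x, x ∉ Set.range t → (Finset.univ.filter fun i => 0 < a i).card =
      (Finset.univ.filter fun i => 0 < a i ∧ x < t i).card +
      (Finset.univ.filter fun i => 0 < a i ∧ t i < x).card := by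
    intro x hx
    rw [← Finset.card_union_of_disjoint]
    · congr 1
      ext i
      have : t i ≠ x := fun h => hx ⟨i, h⟩
      simp
      constructor
      · intro h
        rcases lt_or_gt_of_ne this with h1 | h1
        · exact Or.inr ⟨h, h1⟩
        · exact Or.inl ⟨h, h1⟩
      · rintro (h | h) <;> exact h.1
    · rw [Finset.disjoint_left]
      intro i hi hj
      simp at hi hj
      linarith [hi.2, hj.2]
  have hC : Compr (fun i : {i // a i < 0} => t i) (fun i : {i // 0 < a i} => t i) := by
    refine compr_count _ _ (Set.range t) (Set.finite_range t) ?_ ?_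
    · intro x hx
      rw [card_filter_subtype' (fun i => a i < 0) (fun i => t i < x),
        card_filter_subtype' (fun i => 0 < a i) (fun i => t i < x)]
      have h1 := hmax (w0 * (-x - Complex.I)) (fun i => by
        rw [hre]
        exact mul_ne_zero (hw0 i) (sub_ne_zero.2 fun h => hx ⟨i, h⟩))
      simp only [hre] at h1
      have h2 := hsplit x hx
      have h3 : (Finset.univ.filter fun i => 0 < a i ∧ x < t i).card +
        (Finset.univ.filter fun i => a i < 0 ∧ t i < x).card ≤
        (Finset.univ.filter fun i => 0 < a i * (t i - x)).card := by
        rw [← Finset.card_union_of_disjoint]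
        · refine Finset.card_le_card fun i hi => ?_
          simp at hi ⊢
          rcases hi with h | h
          · exact mul_pos h.1 (by linarith [h.2])
          · exact mul_pos_of_neg_of_neg h.1 (by linarith [h.2])
        · rw [Finset.disjoint_left]
          intro i hi hj
          simp at hi hj
          linarith [hi.2, hj.2]
      change _ ≤ (Finset.univ.filter fun i => 0 < a i).card at h1
      omega
    · intro x hx
      rw [card_filter_subtype' (fun i => a i < 0) (fun i => x < t i),
        card_filter_subtype' (fun i => 0 < a i) (fun i => x < t i)]
      have hre' : ∀ i, (-(w0 * (-x - Complex.I)) * z i).re = - (a i * (t i - x)) := by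
        intro i
        rw [neg_mul, Complex.neg_re, hre]
      have h1 := hmax (-(w0 * (-x - Complex.I))) (fun i => by
        rw [hre']
        exact neg_ne_zero.2 (mul_ne_zero (hw0 i) (sub_ne_zero.2 fun h => hx ⟨i, h⟩)))
      simp only [hre'] at h1
      have h2 := hsplit x hx
      have h3 : (Finset.univ.filter fun i => 0 < a i ∧ t i < x).card +
        (Finset.univ.filter fun i => a i < 0 ∧ x < t i).card ≤
        (Finset.univ.filter fun i => 0 < -(a i * (t i - x))).card := by
        rw [← Finset.card_union_of_disjoint]
        · refine Finset.card_le_card fun i hi => ?_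
          simp only [Finset.mem_union, Finset.mem_filter, Finset.mem_univ, true_and] at hi ⊢
          rcases hi with h | h
          · nlinarith [mul_pos h.1 (sub_pos.2 h.2)]
          · nlinarith [mul_pos (neg_pos.2 h.1) (sub_pos.2 h.2)]
        · rw [Finset.disjoint_left]
          intro i hi hj
          simp at hi hj
          linarith [hi.2, hj.2]
      change _ ≤ (Finset.univ.filter fun i => 0 < a i).card at h1
      omega
  obtain ⟨C, hC1, hC2⟩ := hC
  -- normalised vectors
  set f : ι → E := fun i => (((Real.sqrt |a i|)⁻¹ : ℝ) : ℂ) • b i with hf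
  have hsq : ∀ i, (Real.sqrt |a i|)⁻¹ * (Real.sqrt |a i|)⁻¹ = |a i|⁻¹ := by
    intro i
    rw [← mul_inv, Real.mul_self_sqrt (abs_nonneg _)]
  have hapos : ∀ i, 0 < |a i| := fun i => abs_pos.2 (hw0 i)
  have hfoff : ∀ i j, i ≠ j → inner ℂ (f i) (A (f j)) = 0 := by
    intro i j hij
    simp only [hf, map_smul, inner_smul_left, inner_smul_right, hb i j hij, mul_zero]
  have hfd : ∀ i, w0 * inner ℂ (f i) (A (f i)) = ((a i / |a i| : ℝ) : ℂ) * (1 + t i * Complex.I) := by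
    intro i
    have h1 : w0 * inner ℂ (f i) (A (f i)) =
      (((Real.sqrt |a i|)⁻¹ * (Real.sqrt |a i|)⁻¹ : ℝ) : ℂ) * (w0 * z i) := by
      simp only [hf, map_smul, inner_smul_left, inner_smul_right, Complex.conj_ofReal, hz]
      push_cast; ring
    have h2 : w0 * z i = a i * (1 + t i * Complex.I) := by
      apply Complex.ext
      · simp [ha]
      · have : a i ≠ 0 := hw0 i
        simp [ht]
        rw [mul_div_cancel₀ _ this]
    rw [h1, h2, hsq]
    push_cast
    ring
  have hw00 : {i // a i < 0} → w0 ≠ 0 := by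
    rintro ⟨i, hi⟩ h
    exact hw0 i (by simp [h])
  set g : {i // a i < 0} → E := fun i => f i + ∑ j : {j // 0 < a j}, (C j i : ℂ) • f j with hg
  have hne : ∀ (i : {i // a i < 0}) (j : {j // 0 < a j}), (i : ι) ≠ j := by
    rintro ⟨i, hi⟩ ⟨j, hj⟩ h
    simp only at h; subst h; linarith
  have hfg : ∀ (i i' : {i // a i < 0}), inner ℂ (f i) (A (g i')) = inner ℂ (f i) (A (f i')) := by
    intro i i'
    simp only [hg, map_add, map_sum, map_smul, inner_add_right, inner_sum, inner_smul_right]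
    rw [Finset.sum_eq_zero, add_zero]
    intro j _
    rw [hfoff _ _ (hne i j), mul_zero]
  have hfg2 : ∀ (j : {j // 0 < a j}) (i' : {i // a i < 0}), inner ℂ (f j) (A (g i')) =
      C j i' * inner ℂ (f j) (A (f j)) := by
    intro j i'
    simp only [hg, map_add, map_sum, map_smul, inner_add_right, inner_sum, inner_smul_right]
    rw [hfoff _ _ (hne i' j).symm, zero_add, Finset.sum_eq_single j]
    · intro l _ hl
      rw [hfoff _ _ (fun h => hl (Subtype.ext h.symm)), mul_zero]
    · simp
  have hgg : ∀ i i', inner ℂ (g i) (A (g i')) = 0 := by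
    intro i i'
    have h0 : inner ℂ (g i) (A (g i')) = inner ℂ (f i) (A (f i')) +
        ∑ j, (C j i * C j i' : ℂ) * inner ℂ (f j) (A (f j)) := by
      conv_lhs => rw [hg]
      simp only [inner_add_left, sum_inner, inner_smul_left, Complex.conj_ofReal]
      rw [hfg]
      congr 1
      refine Finset.sum_congr rfl fun j _ => ?_
      rw [hfg2]; ring
    apply (mul_right_inj' (hw00 i)).1
    rw [h0, mul_add, Finset.mul_sum, mul_zero]
    have h1 : ∀ j : {j // 0 < a j}, w0 * ((C j i * C j i' : ℂ) * inner ℂ (f j) (A (f j))) =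
        ((C j i * C j i' : ℝ) : ℂ) + ((C j i * t j * C j i' : ℝ) : ℂ) * Complex.I := by
      intro j
      rw [mul_left_comm, hfd, abs_of_pos j.2, div_self j.2.ne']
      push_cast; ring
    simp only [h1]
    rw [Finset.sum_add_distrib, ← Finset.sum_mul, ← Complex.ofReal_sum, ← Complex.ofReal_sum]
    have e1 : ∑ j, C j i * C j i' = (1 : Matrix {i // a i < 0} {i // a i < 0} ℝ) i i' := by
      rw [← hC1, Matrix.mul_apply]; simp
    have e2 : ∑ j, C j i * t j * C j i' =
        (Matrix.diagonal (fun i : {i // a i < 0} => t i)) i i' := by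
      rw [← hC2, Matrix.mul_apply]
      simp [Matrix.mul_diagonal]
    rw [e1, e2]
    by_cases hii : i = i'
    · subst hii
      rw [hfd, abs_of_neg i.2, div_neg, div_self i.2.ne, Matrix.one_apply_eq, Matrix.diagonal_apply_eq]
      push_cast; ring
    · rw [hfoff _ _ (fun h => hii (Subtype.ext h)), Matrix.one_apply_ne hii,
        Matrix.diagonal_apply_ne _ hii]
      simp
  refine ⟨LinearMap.range (Fintype.linearCombination ℂ g), ?_, ?_, ?_⟩
  · rintro _ ⟨c, rfl⟩
    rw [Fintype.linearCombination_apply]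
    exact W.sum_mem fun i _ => W.smul_mem _ (W.add_mem (W.smul_mem _ (hbW _))
      (W.sum_mem fun j _ => W.smul_mem _ (W.smul_mem _ (hbW _))))
  · rintro _ ⟨c, rfl⟩ _ ⟨c', rfl⟩
    rw [Fintype.linearCombination_apply, Fintype.linearCombination_apply]
    simp only [map_sum, map_smul, sum_inner, inner_sum, inner_smul_left, inner_smul_right, hgg]
    simp
  · rw [finrank_range_comb g (fun i => (innerₛₗ ℂ (f i)) ∘ₗ A), Fintype.card_subtype]
    · have : (Finset.univ.filter fun i => a i < 0).card + (Finset.univ.filter fun i => 0 < a i).card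
          = Fintype.card ι := by
        have e := Finset.card_filter_add_card_filter_not (s := Finset.univ) (fun i => a i < 0)
        rw [← Finset.card_univ, ← e]
        congr 2
        ext i
        have : a i ≠ 0 := hw0 i
        simp
        exact ⟨le_of_lt, fun h => lt_of_le_of_ne h this.symm⟩
      omega
    · intro i h
      have h' : inner ℂ (f i) (A (g i)) = 0 := h
      rw [hfg] at h'
      have h2 := hfd i
      rw [h', mul_zero] at h2
      have h3 := congrArg Complex.re h2
      have h4 : a i / |a i| ≠ 0 := div_ne_zero (hw0 i) (hapos i).ne'
      rw [Complex.re_ofReal_mul] at h3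
      simp at h3
      exact h4 h3.symm
    · intro i j hij
      change inner ℂ (f i) (A (g j)) = 0
      rw [hfg, hfoff _ _ (fun h => hij (Subtype.ext h))]

theorem main_iso (A : E →ₗ[ℂ] E) (m : ℕ) : ∀ (W : Submodule ℂ E), Module.finrank ℂ W = m →
    ∀ r : ℕ, (∀ (w : ℂ) (S : Submodule ℂ E), S ≤ W → PDef A w S → Module.finrank ℂ S ≤ r) →
    ∃ V ≤ W, Isotr A V ∧ m ≤ Module.finrank ℂ V + r := by
  induction m using Nat.strong_induction_on with
  | _ m ih =>
  intro W hW r hr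
  rcases diag_or_isotr A m W hW with ⟨v, ⟨hvW, hv0, u, γ, δ, hγδ, hu⟩, hvA⟩ | ⟨b, hb1, hb2, hb3⟩
  swap
  · simpa using diag_iso A W b hb1 hb2 hb3 r hr
  have hvu : inner ℂ v u = 0 := by
    have h1 := (hu v hvW).1
    have h2 := (hu v hvW).2
    rw [← inner_conj_symm, hvA, map_zero] at h2
    rw [hvA] at h1
    rcases hγδ with h | h
    · exact (mul_eq_zero.1 h1.symm).resolve_left h
    · exact (mul_eq_zero.1 h2.symm).resolve_left h
  set W1 := W ⊓ (Submodule.span ℂ {u})ᗮ with hW1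
  set W2 := W1 ⊓ (Submodule.span ℂ {v})ᗮ with hW2
  have hvW2 : v ∉ W2 := fun h => by
    have := (Submodule.mem_orthogonal_singleton_iff_inner_left).1 h.2
    exact hv0 (inner_self_eq_zero.1 this)
  have hle : W2 ≤ W := inf_le_left.trans inf_le_left
  have hu0 : ∀ y ∈ W2, inner ℂ y u = 0 := fun y hy =>
    (Submodule.mem_orthogonal_singleton_iff_inner_left).1 hy.1.2
  have hlt : Module.finrank ℂ W2 < Module.finrank ℂ W :=
    Submodule.finrank_lt_finrank_of_lt (lt_of_le_of_ne hle (fun h => hvW2 (h ▸ hvW)))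
  have hg1 := finrank_hyper W u
  have hg2 := finrank_hyper W1 v
  rw [← hW1] at hg1
  rw [← hW2] at hg2
  -- how to finish
  have fin : ∀ V ≤ W2, Isotr A V → ∃ V' ≤ W, Isotr A V' ∧
      Module.finrank ℂ V' = Module.finrank ℂ V + 1 := by
    intro V hV hVi
    refine ⟨V ⊔ Submodule.span ℂ {v}, sup_le (hV.trans hle) (by simpa using hvW),
      hVi.sup v hvA ?_ ?_, Submodule.finrank_sup_span_singleton (fun h => hvW2 (hV h))⟩
    · intro y hy
      rw [(hu y (hle (hV hy))).1, hu0 y (hV hy), mul_zero]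
    · intro y hy
      rw [(hu y (hle (hV hy))).2, hu0 y (hV hy), mul_zero]
  by_cases hrad : ∀ y ∈ W, inner ℂ y u = 0
  · have hWW : W1 = W := by
      refine le_antisymm inf_le_left fun y hy => ⟨hy, ?_⟩
      exact (Submodule.mem_orthogonal_singleton_iff_inner_left).2 (hrad y hy)
    rw [hWW] at hg2
    obtain ⟨V, hV, hVi, hVr⟩ := ih _ (hW ▸ hlt) W2 rfl r
      (fun w S hS hSP => hr w S (hS.trans hle) hSP)
    obtain ⟨V', h1, h2, h3⟩ := fin V hV hVi
    exact ⟨V', h1, h2, by omega⟩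
  · push Not at hrad
    obtain ⟨y0, hy0W, hy0⟩ := hrad
    have hform_v : ∀ w, ∀ y ∈ W, hform A w y v = (w * γ + (starRingEnd ℂ) w * δ) * inner ℂ y u := by
      intro w y hy
      rw [hform, (hu y hy).1, (hu y hy).2]; ring
    have hbound : ∀ (w : ℂ) (S : Submodule ℂ E), S ≤ W2 → PDef A w S → Module.finrank ℂ S + 1 ≤ r := by
      -- first the nondegenerate `w`
      have hnd : ∀ (w : ℂ) (S : Submodule ℂ E), S ≤ W2 → PDef A w S →
          w * γ + (starRingEnd ℂ) w * δ ≠ 0 → Module.finrank ℂ S + 1 ≤ r := by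
        intro w S hS hP hw
        obtain ⟨t, ht⟩ := hP.extend v y0 hvA
          (fun s hs => by rw [hform_v w s (hle (hS hs)), hu0 s (hS hs), mul_zero])
          (by rw [hform_v w y0 hy0W]; exact mul_ne_zero hw hy0)
        have hmem : y0 + t • v ∉ S := by
          intro h
          have := hu0 _ (hS h)
          rw [inner_add_left, inner_smul_left, hvu, mul_zero, add_zero] at this
          exact hy0 this
        rw [← Submodule.finrank_sup_span_singleton hmem]
        refine hr w _ (sup_le (hS.trans hle) ?_) ht
        simpa using W.add_mem hy0W (W.smul_mem t hvW)
      intro w S hS hP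
      by_cases hw : w * γ + (starRingEnd ℂ) w * δ = 0
      · obtain ⟨w1, hw1⟩ : ∃ w1 : ℂ, w1 * γ + (starRingEnd ℂ) w1 * δ ≠ 0 := by
          by_contra! h
          have h1 := h 1
          have h2 := h Complex.I
          simp only [map_one, one_mul, Complex.conj_I] at h1 h2
          have h3 : Complex.I * (γ - δ) = 0 := by linear_combination h2
          have h4 := (mul_eq_zero.1 h3).resolve_left Complex.I_ne_zero
          have h5 : γ = 0 := by linear_combination (h1 + h4) / 2
          have h6 : δ = 0 := by linear_combination (h1 - h4) / 2
          rcases hγδ with h | h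
          · exact h h5
          · exact h h6
        obtain ⟨ε, hε, hP'⟩ := hP.perturb w1
        refine hnd _ S hS hP' ?_
        have : (w + ε * w1) * γ + (starRingEnd ℂ) (w + ε * w1) * δ =
            (w * γ + (starRingEnd ℂ) w * δ) + ε * (w1 * γ + (starRingEnd ℂ) w1 * δ) := by
          simp only [map_add, map_mul, Complex.conj_ofReal]; ring
        rw [this, hw, zero_add]
        exact mul_ne_zero (by exact_mod_cast hε.ne') hw1
      · exact hnd w S hS hP hw
    have hr1 : 1 ≤ r := by
      have := hbound 0 ⊥ bot_le (fun x hx hx0 => absurd (by simpa using hx) hx0)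
      omega
    obtain ⟨V, hV, hVi, hVr⟩ := ih _ (hW ▸ hlt) W2 rfl (r - 1)
      (fun w S hS hSP => by have := hbound w S hS hSP; omega)
    obtain ⟨V', h1, h2, h3⟩ := fin V hV hVi
    exact ⟨V', h1, h2, by omega⟩
end geom

section finalpart

theorem spectral_sub {n : ℕ} (M : Matrix (Fin n) (Fin n) ℂ) (hM : M.IsHermitian)
    (P : Fin n → Prop) [DecidablePred P] :
    ∃ N : Submodule ℂ (EuclideanSpace ℂ (Fin n)),
      Module.finrank ℂ N = (Finset.univ.filter P).card ∧
      ∀ x ∈ N, ∃ c : {i // P i} → ℂ, (x ≠ 0 → ∃ i, c i ≠ 0) ∧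
        (inner ℂ x (Matrix.toEuclideanLin M x)).re = ∑ i, ‖c i‖ ^ 2 * hM.eigenvalues i := by
  have hT : ∀ i, Matrix.toEuclideanLin M (hM.eigenvectorBasis i) =
      (hM.eigenvalues i : ℂ) • hM.eigenvectorBasis i := by
    intro i
    ext j
    have := congrFun (hM.mulVec_eigenvectorBasis i) j
    simpa [Matrix.ofLp_toEuclideanLin_apply] using this
  have hon := hM.eigenvectorBasis.orthonormal
  set b : {i // P i} → EuclideanSpace ℂ (Fin n) := fun i => hM.eigenvectorBasis i with hb
  refine ⟨LinearMap.range (Fintype.linearCombination ℂ b), ?_, ?_⟩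
  · rw [finrank_range_comb b (fun i => innerₛₗ ℂ (b i)), Fintype.card_subtype]
    · intro i
      simp [hb]
    · intro i j hij
      exact hon.2 (fun h => hij (Subtype.ext h))
  · rintro _ ⟨c, rfl⟩
    refine ⟨c, ?_, ?_⟩
    · intro hx
      by_contra! h
      apply hx
      have : c = 0 := funext h
      rw [this, map_zero]
    · rw [Fintype.linearCombination_apply, comb_inner]
      · rw [Complex.re_sum]
        refine Finset.sum_congr rfl fun i _ => ?_
        rw [Complex.re_ofReal_mul, hb]
        simp only [hT]
        rw [inner_smul_right, Complex.re_ofReal_mul, inner_self_eq_norm_sq_to_K, hon.1]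
        simp
      · intro i j hij
        rw [hb]
        simp only [hT]
        rw [inner_smul_right, hon.2 (fun h => hij (Subtype.ext h)), mul_zero]

theorem matRe_herm {n : ℕ} (A : Matrix (Fin n) (Fin n) ℂ) : (matRe A).IsHermitian := by
  unfold matRe Matrix.IsHermitian
  rw [Matrix.conjTranspose_smul, Matrix.conjTranspose_add, Matrix.conjTranspose_conjTranspose,
    add_comm]
  simp

theorem matRe_form {n : ℕ} (A : Matrix (Fin n) (Fin n) ℂ) (c : ℂ)
    (x : EuclideanSpace ℂ (Fin n)) :
    (inner ℂ x (Matrix.toEuclideanLin (matRe (c • A)) x)).re =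
      (c * inner ℂ x (Matrix.toEuclideanLin A x)).re := by
  unfold matRe
  have h : inner ℂ x (Matrix.toEuclideanLin (c • A)ᴴ x) =
      (starRingEnd ℂ) (inner ℂ x (Matrix.toEuclideanLin (c • A) x)) := by
    rw [Matrix.toEuclideanLin_conjTranspose_eq_adjoint, LinearMap.adjoint_inner_right,
      inner_conj_symm]
  rw [map_smul, map_add, LinearMap.smul_apply, LinearMap.add_apply, inner_smul_right,
    inner_add_right, h, map_smul, LinearMap.smul_apply, inner_smul_right]
  rw [Complex.add_conj]
  push_cast
  rw [← mul_assoc, inv_mul_cancel₀ two_ne_zero, one_mul, Complex.ofReal_re]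

theorem iNonneg_subs {n : ℕ} (A : Matrix (Fin n) (Fin n) ℂ) (c : ℂ) :
    (∃ N : Submodule ℂ (EuclideanSpace ℂ (Fin n)),
      Module.finrank ℂ N = iNonneg (matRe (c • A)) ∧
      ∀ x ∈ N, 0 ≤ (c * inner ℂ x (Matrix.toEuclideanLin A x)).re) ∧
    (∃ N : Submodule ℂ (EuclideanSpace ℂ (Fin n)),
      Module.finrank ℂ N + iNonneg (matRe (c • A)) = n ∧
      ∀ x ∈ N, x ≠ 0 → (c * inner ℂ x (Matrix.toEuclideanLin A x)).re < 0) := by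
  have hM := matRe_herm (c • A)
  have e : iNonneg (matRe (c • A)) =
      (Finset.univ.filter fun i => 0 ≤ hM.eigenvalues i).card := by
    unfold iNonneg
    rw [dif_pos hM]
  constructor
  · obtain ⟨N, h1, h2⟩ := spectral_sub _ hM (fun i => 0 ≤ hM.eigenvalues i)
    refine ⟨N, by rw [h1, e], fun x hx => ?_⟩
    obtain ⟨d, -, hd⟩ := h2 x hx
    rw [← matRe_form, hd]
    exact Finset.sum_nonneg fun i _ => mul_nonneg (sq_nonneg _) i.2
  · obtain ⟨N, h1, h2⟩ := spectral_sub _ hM (fun i => ¬ 0 ≤ hM.eigenvalues i)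
    refine ⟨N, ?_, fun x hx hx0 => ?_⟩
    · rw [h1, e, add_comm, Finset.card_filter_add_card_filter_not]
      simp
    · obtain ⟨d, h0, hd⟩ := h2 x hx
      obtain ⟨i, hi⟩ := h0 hx0
      rw [← matRe_form, hd]
      refine Finset.sum_neg' (fun j _ => ?_) ⟨i, Finset.mem_univ _, ?_⟩
      · exact mul_nonpos_of_nonneg_of_nonpos (sq_nonneg _) (not_le.1 j.2).le
      · exact mul_neg_of_pos_of_neg (by positivity) (not_le.1 i.2)

theorem zdi_mem_bound {n k : ℕ} (A : Matrix (Fin n) (Fin n) ℂ) (c : ℂ)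
    (V : Matrix (Fin n) (Fin k) ℂ) (h1 : Vᴴ * V = 1) (h2 : Vᴴ * A * V = 0) :
    k ≤ iNonneg (matRe (c • A)) := by
  obtain ⟨N, hN, hneg⟩ := (iNonneg_subs A c).2
  have hinj : Function.Injective (Matrix.toEuclideanLin V) := by
    have hh : ∀ x, Matrix.toEuclideanLin Vᴴ (Matrix.toEuclideanLin V x) = x := by
      intro x
      ext i
      simp only [Matrix.ofLp_toEuclideanLin_apply, Matrix.mulVec_mulVec, h1, Matrix.one_mulVec]
    exact Function.LeftInverse.injective hh
  have hr : Module.finrank ℂ (LinearMap.range (Matrix.toEuclideanLin V)) = k := by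
    rw [LinearMap.finrank_range_of_inj hinj]
    simp
  have hz : ∀ x, inner ℂ (Matrix.toEuclideanLin V x)
      (Matrix.toEuclideanLin A (Matrix.toEuclideanLin V x)) = 0 := by
    intro x
    rw [← LinearMap.adjoint_inner_right, ← Matrix.toEuclideanLin_conjTranspose_eq_adjoint]
    have : Matrix.toEuclideanLin Vᴴ
        (Matrix.toEuclideanLin A (Matrix.toEuclideanLin V x)) = 0 := by
      ext i
      simp only [Matrix.ofLp_toEuclideanLin_apply, Matrix.mulVec_mulVec, ← Matrix.mul_assoc, h2]
      simp
    rw [this, inner_zero_right]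
  have hd : Disjoint N (LinearMap.range (Matrix.toEuclideanLin V)) := by
    rw [Submodule.disjoint_def]
    rintro _ hx ⟨x, rfl⟩
    by_contra h0
    have := hneg _ hx h0
    rw [hz] at this
    simp at this
  have := Submodule.finrank_add_finrank_le_of_disjoint hd
  rw [hr, finrank_euclideanSpace, Fintype.card_fin] at this
  omega

theorem pdef_bound {n : ℕ} (A : Matrix (Fin n) (Fin n) ℂ) (k0 : ℕ)
    (hk : ∀ θ : ℝ, k0 ≤ iNonneg (matRe (Complex.exp (-(θ : ℂ) * Complex.I) • A)))
    (w : ℂ) (S : Submodule ℂ (EuclideanSpace ℂ (Fin n)))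
    (hS : PDef (Matrix.toEuclideanLin A) w S) : Module.finrank ℂ S + k0 ≤ n := by
  set θ : ℝ := -Complex.arg (-w) with hθ
  obtain ⟨N, hN, hpos⟩ := (iNonneg_subs A (Complex.exp (-(θ : ℂ) * Complex.I))).1
  have hw : w = -(((‖w‖ : ℝ) : ℂ) * Complex.exp (-(θ : ℂ) * Complex.I)) := by
    have := Complex.norm_mul_exp_arg_mul_I (-w)
    rw [norm_neg] at this
    rw [hθ]
    push_cast
    rw [neg_neg, this, neg_neg]
  have hd : Disjoint S N := by
    rw [Submodule.disjoint_def]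
    intro x hx hx'
    by_contra h0
    have h1 := hS x hx h0
    have h2 := hpos x hx'
    rw [hw, neg_mul, Complex.neg_re, mul_assoc, Complex.re_ofReal_mul] at h1
    have := mul_nonneg (norm_nonneg w) h2
    linarith
  have := Submodule.finrank_add_finrank_le_of_disjoint hd
  rw [hN, finrank_euclideanSpace, Fintype.card_fin] at this
  have := hk θ
  omega

theorem isotr_matrix {n : ℕ} (A : Matrix (Fin n) (Fin n) ℂ)
    (W : Submodule ℂ (EuclideanSpace ℂ (Fin n))) (hW : Isotr (Matrix.toEuclideanLin A) W) :
    ∃ V : Matrix (Fin n) (Fin (Module.finrank ℂ W)) ℂ, Vᴴ * V = 1 ∧ Vᴴ * A * V = 0 := by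
  set b := stdOrthonormalBasis ℂ W
  refine ⟨Matrix.of fun i j => (b j : EuclideanSpace ℂ (Fin n)) i, ?_, ?_⟩
  · ext i j
    have h := orthonormal_iff_ite.1 b.orthonormal i j
    rw [Matrix.one_apply, ← h, Submodule.coe_inner, PiLp.inner_apply, Matrix.mul_apply]
    refine Finset.sum_congr rfl fun l _ => ?_
    simp [mul_comm]
  · ext i j
    have h := hW (b j) (b j).2 (b i) (b i).2
    rw [PiLp.inner_apply] at h
    rw [Matrix.zero_apply, ← h, Matrix.mul_assoc, Matrix.mul_apply]
    refine Finset.sum_congr rfl fun l _ => ?_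
    rw [Matrix.ofLp_toEuclideanLin_apply]
    simp [mul_comm, Matrix.mul_apply, Matrix.mulVec, dotProduct]

end finalpart

/-- Theorem 2.2, Li–Sze. -/
theorem zdi_eq_min_iNonneg {n : ℕ} (A : Matrix (Fin n) (Fin n) ℂ) :
    ∃ θ₀ : ℝ, zdi A = iNonneg (matRe (Complex.exp (-(θ₀ : ℂ) * Complex.I) • A)) ∧
      ∀ θ : ℝ, zdi A ≤ iNonneg (matRe (Complex.exp (-(θ : ℂ) * Complex.I) • A)) := by
  obtain ⟨θ₀, h0⟩ : ∃ θ₀ : ℝ, ∀ θ : ℝ,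
      iNonneg (matRe (Complex.exp (-(θ₀ : ℂ) * Complex.I) • A)) ≤
      iNonneg (matRe (Complex.exp (-(θ : ℂ) * Complex.I) • A)) := by
    have := WellFounded.has_min (wellFounded_lt (α := ℕ)) (Set.range fun θ : ℝ =>
      iNonneg (matRe (Complex.exp (-(θ : ℂ) * Complex.I) • A))) (Set.range_nonempty _)
    obtain ⟨_, ⟨θ₀, rfl⟩, h⟩ := this
    exact ⟨θ₀, fun θ => not_lt.1 (h _ ⟨θ, rfl⟩)⟩
  have hle : ∀ θ : ℝ, zdi A ≤ iNonneg (matRe (Complex.exp (-(θ : ℂ) * Complex.I) • A)) := by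
    intro θ
    refine csSup_le ⟨0, 0, Subsingleton.elim _ _, Subsingleton.elim _ _⟩ ?_
    rintro k ⟨V, h1, h2⟩
    exact zdi_mem_bound A _ V h1 h2
  refine ⟨θ₀, le_antisymm (hle θ₀) ?_, hle⟩
  set k0 := iNonneg (matRe (Complex.exp (-(θ₀ : ℂ) * Complex.I) • A)) with hk0
  have hk0n : k0 ≤ n := by
    obtain ⟨N, hN, -⟩ := (iNonneg_subs A (Complex.exp (-(θ₀ : ℂ) * Complex.I))).2
    omega
  obtain ⟨V, -, hV, hm⟩ := main_iso (Matrix.toEuclideanLin A) n ⊤ (by simp) (n - k0) (by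
    intro w S _ hS
    have := pdef_bound A k0 h0 w S hS
    omega)
  have hmem : Module.finrank ℂ V ≤ zdi A := by
    refine le_csSup ⟨k0, ?_⟩ (isotr_matrix A V hV)
    rintro k ⟨V, h1, h2⟩
    exact zdi_mem_bound A _ V h1 h2
  omega
end

section
/- For any n-by-n complex matrix A, d(A) = min over θ ∈ ℝ of d(Re(e^{−iθ}A)), where the minimum is attained. -/
open Matrix Polynomial

lemma lag_annih {ι : Type*} [DecidableEq ι] (s : Finset ι) (t : ι → ℂ)
    (hinj : Set.InjOn t s) (g : ℂ[X]) (hg : g.natDegree + 1 < s.card) :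
    ∑ i ∈ s, g.eval (t i) / ∏ j ∈ s.erase i, (t i - t j) = 0 := by
  have h1 : g.degree < s.card := by
    refine lt_of_le_of_lt Polynomial.degree_le_natDegree ?_
    exact_mod_cast (by omega : g.natDegree < s.card)
  have h2 := Lagrange.coeff_eq_sum (P := g) hinj h1
  rw [← h2]
  apply Polynomial.coeff_eq_zero_of_natDegree_lt
  omega

lemma prod_sign {ι : Type*} [LinearOrder ι] (s : Finset ι) (t : ι → ℝ)
    (hm : StrictMonoOn t s) (j : ι) (hj : j ∈ s) :
    ∏ l ∈ s.erase j, (t j - t l) =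
      (-1) ^ (s.filter (fun l => j < l)).card * ∏ l ∈ s.erase j, |t j - t l| := by
  have h1 : ∀ l ∈ s.erase j, t j - t l = (if j < l then (-1 : ℝ) else 1) * |t j - t l| := by
    intro l hl
    rw [Finset.mem_erase] at hl
    split_ifs with h
    · have := hm hj hl.2 h
      rw [abs_of_neg (by linarith)]; ring
    · have := hm hl.2 hj (lt_of_le_of_ne (not_lt.mp h) hl.1)
      rw [abs_of_pos (by linarith)]; ring
  rw [Finset.prod_congr rfl h1, Finset.prod_mul_distrib, ← Finset.prod_filter, Finset.prod_const]
  congr 3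
  ext l
  simp only [Finset.mem_filter, Finset.mem_erase]
  constructor
  · rintro ⟨⟨_, h⟩, h'⟩; exact ⟨h, h'⟩
  · rintro ⟨h, h'⟩; exact ⟨⟨h'.ne', h⟩, h'⟩

/-- parity of the number of later crossings of a level -/
lemma walk_parity (n e : ℕ) (p : ℕ → ℕ)
    (hstep : ∀ i < n, p (i + 1) = p i + 1 ∨ p (i + 1) + 1 = p i) (hend : e + 1 ≤ p n) (d : ℕ)
    (hd : d ≤ n) :
    Even ((Finset.Ico (n - d) n).filter (fun j => min (p j) (p (j + 1)) = e)).card ↔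
      e + 1 ≤ p (n - d) := by
  induction d with
  | zero => simp [hend]
  | succ d ih =>
    have ih := ih (by omega)
    obtain ⟨i, hi⟩ : ∃ i, i = n - (d + 1) := ⟨_, rfl⟩
    have h2 : n - d = i + 1 := by omega
    have hin : i < n := by omega
    rw [← hi]
    rw [h2] at ih
    rw [← Finset.insert_Ico_add_one_left_eq_Ico hin, Finset.filter_insert]
    have hs := hstep i hin
    split_ifs with h
    · rw [Finset.card_insert_of_notMem (by simp), Nat.even_add_one, ih]
      omega
    · rw [ih]; omega

lemma combi (n k : ℕ) (b : ℕ → ℂ) (hb : ∀ j < n, (b j).re ≠ 0)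
    (hmono : ∀ i j, i ≤ j → j < n → (b i).im / (b i).re ≤ (b j).im / (b j).re)
    (hopp : ∀ i < n, ∀ j < n, ∀ c : ℝ, 0 < c → b j ≠ -(c : ℂ) * b i)
    (hk : ((Finset.range n).filter (fun j => 0 < (b j).re)).card = k)
    (hmin : ∀ ω : ℂ, ω ≠ 0 → k ≤ ((Finset.range n).filter (fun j => 0 < (ω * b j).re)).card) :
    2 * k ≤ n ∧ ∃ e : ℕ → ℕ, (∀ j < n, e j ∈ Finset.Ico k (n - k)) ∧
      ∀ l ∈ Finset.Ico k (n - k),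
        Odd ((Finset.range n).filter (fun j => e j = l)).card ∧
        StrictMonoOn (fun j => (b j).im / (b j).re) ((Finset.range n).filter (fun j => e j = l)) ∧
        ∀ j ∈ (Finset.range n).filter (fun j => e j = l),
          (Even (((Finset.range n).filter (fun j => e j = l)).filter (fun i => j < i)).card ↔
            (b j).re < 0) := by
  classical
  set t : ℕ → ℝ := fun j => (b j).im / (b j).re with ht
  have htim : ∀ j < n, (b j).im = t j * (b j).re := by
    intro j hj; simp only [ht]; field_simp [hb j hj]
  -- the walk
  obtain ⟨p, hp⟩ : ∃ p : ℕ → ℕ, ∀ i, p i =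
      ((Finset.range n).filter (fun j => (j < i ∧ (b j).re < 0) ∨ (i ≤ j ∧ 0 < (b j).re))).card :=
    ⟨_, fun _ => rfl⟩
  have hp' : ∀ i, p i + ((Finset.range n).filter
      (fun j => (j < i ∧ 0 < (b j).re) ∨ (i ≤ j ∧ (b j).re < 0))).card = n := by
    intro i
    rw [hp, ← Finset.card_union_of_disjoint]
    · conv_rhs => rw [← Finset.card_range n]
      congr 1
      ext j
      simp only [Finset.mem_union, Finset.mem_filter, Finset.mem_range]
      constructor
      · rintro (h | h) <;> exact h.1
      · intro h
        rcases lt_or_gt_of_ne (hb j h) with h1 | h1 <;> rcases lt_or_ge j i with h2 | h2 <;> tauto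
    · rw [Finset.disjoint_left]
      intro j hj hj'
      simp only [Finset.mem_filter, Finset.mem_range] at hj hj'
      rcases hj.2 with h | h <;> rcases hj'.2 with h' | h' <;> linarith [h.2, h'.2]
  have hp0 : p 0 = k := by
    rw [hp, ← hk]; congr 1; ext j; simp
  have hpn : p n = n - k := by
    have h := hp' n
    have : ((Finset.range n).filter
      (fun j => (j < n ∧ 0 < (b j).re) ∨ (n ≤ j ∧ (b j).re < 0))).card = k := by
      rw [← hk]; congr 1; ext j; simp only [Finset.mem_filter, Finset.mem_range]
      constructor
      · rintro ⟨h1, h | h⟩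
        · exact ⟨h1, h.2⟩
        · omega
      · rintro ⟨h1, h⟩; exact ⟨h1, Or.inl ⟨h1, h⟩⟩
    omega
  have hre : ∀ j < n, ∀ τ : ℝ, ((-Complex.I - τ) * b j).re = (t j - τ) * (b j).re := by
    intro j hj τ
    have := htim j hj
    simp [Complex.mul_re]
    rw [this]; ring
  have hre' : ∀ j < n, ∀ τ : ℝ, ((Complex.I + τ) * b j).re = (τ - t j) * (b j).re := by
    intro j hj τ
    have := htim j hj
    simp [Complex.mul_re]
    rw [this]; ring
  have hlow : ∀ i < n, k ≤ p i := by
    intro i hi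
    have hne : (-Complex.I - (t i : ℝ)) ≠ 0 := by
      intro h; have := congrArg Complex.im h; simp at this
    refine (hmin _ hne).trans ?_
    rw [hp]
    apply Finset.card_le_card
    intro j hj
    simp only [Finset.mem_filter, Finset.mem_range] at hj ⊢
    obtain ⟨hj, h⟩ := hj
    rw [hre j hj] at h
    refine ⟨hj, ?_⟩
    rcases lt_or_ge j i with h2 | h2
    · left; refine ⟨h2, ?_⟩
      have := hmono j i h2.le hi
      by_contra hc
      nlinarith [mul_nonneg (sub_nonneg.2 this) (not_lt.1 hc)]
    · right; refine ⟨h2, ?_⟩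
      have := hmono i j h2 hj
      by_contra hc
      nlinarith [mul_nonneg (sub_nonneg.2 this) (neg_nonneg.2 (not_lt.1 hc))]
  have hhigh : ∀ i < n, p i + k ≤ n := by
    intro i hi
    have hne : (Complex.I + (t i : ℝ)) ≠ 0 := by
      intro h; have := congrArg Complex.im h; simp at this
    rw [← hp' i, add_le_add_iff_left]
    refine (hmin _ hne).trans ?_
    apply Finset.card_le_card
    intro j hj
    simp only [Finset.mem_filter, Finset.mem_range] at hj ⊢
    obtain ⟨hj, h⟩ := hj
    rw [hre' j hj] at h
    refine ⟨hj, ?_⟩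
    rcases lt_or_ge j i with h2 | h2
    · left; refine ⟨h2, ?_⟩
      have := hmono j i h2.le hi
      by_contra hc
      nlinarith [mul_nonneg (sub_nonneg.2 this) (neg_nonneg.2 (not_lt.1 hc))]
    · right; refine ⟨h2, ?_⟩
      have := hmono i j h2 hj
      by_contra hc
      nlinarith [mul_nonneg (sub_nonneg.2 this) (not_lt.1 hc)]
  have h2k : 2 * k ≤ n := by
    rcases Nat.eq_zero_or_pos n with h | h
    · subst h; simp at hk; omega
    · have := hhigh 0 h; omega
  have hup : ∀ i < n, (b i).re < 0 → p (i + 1) = p i + 1 := by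
    intro i hi hneg
    rw [hp, hp, ← Finset.card_insert_of_notMem (a := i)]
    · congr 1
      ext j
      simp only [Finset.mem_filter, Finset.mem_range, Finset.mem_insert]
      rcases lt_trichotomy j i with h | h | h
      · have : j ≠ i := h.ne
        have : j < i + 1 := by omega
        have : ¬ (i + 1 ≤ j) := by omega
        have : ¬ (i ≤ j) := by omega
        tauto
      · subst h; simp [hi, hneg]
      · have : j ≠ i := h.ne'
        have : ¬ j < i + 1 := by omega
        have : (i + 1 ≤ j) := by omega
        have : (i ≤ j) := by omega
        have : ¬ (j < i) := by omega
        tauto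
    · simp; intro _; linarith
  have hdown : ∀ i < n, 0 < (b i).re → p (i + 1) + 1 = p i := by
    intro i hi hpos
    rw [hp, hp, ← Finset.card_insert_of_notMem (a := i)]
    · congr 1
      ext j
      simp only [Finset.mem_filter, Finset.mem_range, Finset.mem_insert]
      rcases lt_trichotomy j i with h | h | h
      · have : j ≠ i := h.ne
        have : j < i + 1 := by omega
        have : ¬ (i + 1 ≤ j) := by omega
        have : ¬ (i ≤ j) := by omega
        tauto
      · subst h; simp [hi, hpos]
      · have : j ≠ i := h.ne'
        have : ¬ j < i + 1 := by omega
        have : (i + 1 ≤ j) := by omega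
        have : (i ≤ j) := by omega
        have : ¬ (j < i) := by omega
        tauto
    · simp; intro _; linarith
  have hstep : ∀ i < n, p (i + 1) = p i + 1 ∨ p (i + 1) + 1 = p i := by
    intro i hi
    rcases lt_or_gt_of_ne (hb i hi) with h | h
    · exact Or.inl (hup i hi h)
    · exact Or.inr (hdown i hi h)
  have hbd : ∀ i ≤ n, k ≤ p i ∧ p i ≤ n - k := by
    intro i hi
    rcases hi.lt_or_eq with h | h
    · have := hlow i h; have := hhigh i h; omega
    · subst h; omega
  -- equal parameters force equal signs
  have hsame : ∀ i < n, ∀ j < n, t i = t j → (b i).re < 0 → (b j).re < 0 := by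
    intro i hi j hj hij hneg
    by_contra hc
    have hpos : 0 < (b j).re := lt_of_le_of_ne (not_lt.1 hc) (hb j hj).symm
    have hbi := hb i hi
    obtain ⟨c, hc0, hcb⟩ : ∃ c : ℝ, 0 < c ∧ (b j).re = -c * (b i).re :=
      ⟨(b j).re / -(b i).re, div_pos hpos (by linarith), by field_simp⟩
    refine hopp i hi j hj c hc0 ?_
    apply Complex.ext
    · simp [hcb]
    · simp; rw [htim i hi, htim j hj, hij, hcb]; ring
  refine ⟨h2k, fun j => min (p j) (p (j + 1)), ?_, ?_⟩
  · intro j hj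
    have h1 := hbd j hj.le
    have h2 := hbd (j + 1) hj
    have h3 := hstep j hj
    simp only [Finset.mem_Ico]; omega
  · intro l hl
    rw [Finset.mem_Ico] at hl
    have hpar := walk_parity n l p hstep (by omega)
    refine ⟨?_, ?_, ?_⟩
    · rw [← Nat.not_even_iff_odd]
      have := hpar n le_rfl
      rw [Nat.sub_self, hp0, ← Finset.range_eq_Ico] at this
      rw [this]; omega
    · intro i hi j hj hij
      simp only [Finset.coe_filter, Finset.mem_range, Set.mem_ofPred_eq] at hi hj
      refine lt_of_le_of_ne (hmono i j hij.le hj.1) ?_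
      intro heq
      have hall : ∀ m, i ≤ m → m ≤ j → t m = t i := by
        intro m h1 h2
        have a1 := hmono i m h1 (by omega)
        have a2 := hmono m j h2 hj.1
        exact le_antisymm (a2.trans heq.symm.le) a1
      rcases lt_or_gt_of_ne (hb i hi.1) with h | h
      · have hmon : ∀ m, i + m ≤ j + 1 → p (i + m) = p i + m := by
          intro m
          induction m with
          | zero => simp
          | succ m ih =>
            intro hm
            have hneg := hsame i hi.1 (i + m) (by omega) (hall (i + m) (by omega) (by omega)).symm h
            have := hup (i + m) (by omega) hneg
            have := ih (by omega)
            rw [show i + (m + 1) = i + m + 1 from rfl]; omega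
        have e1 := hmon 1 (by omega)
        have e2 := hmon (j - i) (by omega)
        have e3 := hmon (j + 1 - i) (by omega)
        rw [show i + (j - i) = j by omega] at e2
        rw [show i + (j + 1 - i) = j + 1 by omega] at e3
        omega
      · have hmon : ∀ m, i + m ≤ j + 1 → p (i + m) + m = p i := by
          intro m
          induction m with
          | zero => simp
          | succ m ih =>
            intro hm
            have hpos : 0 < (b (i + m)).re := by
              rcases lt_or_gt_of_ne (hb (i + m) (by omega)) with h' | h'
              · have := hsame (i + m) (by omega) i hi.1 (hall (i + m) (by omega) (by omega)) h'
                linarith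
              · exact h'
            have := hdown (i + m) (by omega) hpos
            have := ih (by omega)
            rw [show i + (m + 1) = i + m + 1 from rfl]; omega
        have e1 := hmon 1 (by omega)
        have e2 := hmon (j - i) (by omega)
        have e3 := hmon (j + 1 - i) (by omega)
        rw [show i + (j - i) = j by omega] at e2
        rw [show i + (j + 1 - i) = j + 1 by omega] at e3
        omega
    · intro j hj
      simp only [Finset.mem_filter, Finset.mem_range] at hj
      have := hpar (n - (j + 1)) (by omega)
      rw [show n - (n - (j + 1)) = j + 1 by omega] at this
      have hset : (((Finset.range n).filter (fun j => min (p j) (p (j + 1)) = l)).filter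
          (fun i => j < i)) =
          (Finset.Ico (j + 1) n).filter (fun j => min (p j) (p (j + 1)) = l) := by
        ext i
        simp only [Finset.mem_filter, Finset.mem_range, Finset.mem_Ico]
        constructor
        · rintro ⟨⟨h1, h2⟩, h3⟩; exact ⟨⟨h3, h1⟩, h2⟩
        · rintro ⟨⟨h3, h1⟩, h2⟩; exact ⟨⟨h1, h2⟩, h3⟩
      rw [hset, this]
      constructor
      · intro h
        by_contra hc
        have := hdown j hj.1 (lt_of_le_of_ne (not_lt.1 hc) (hb j hj.1).symm)
        omega
      · intro h
        have := hup j hj.1 h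
        omega

lemma chain_zero (s : Finset ℕ) (t : ℕ → ℝ) (hm : StrictMonoOn t s) (r : ℕ)
    (hr : s.card = 2 * r + 1) (P : ℂ[X]) (hP : P ∈ degreeLT ℂ r) (σ : ℕ → ℝ)
    (hσ : ∀ j ∈ s, σ j = -(-1) ^ (s.filter (fun l => j < l)).card) :
    ∑ j ∈ s, (σ j : ℂ) * (|∏ l ∈ s.erase j, (t j - t l)|⁻¹ : ℝ) * (1 + t j * Complex.I) *
      (P.eval (t j : ℂ) * (starRingEnd ℂ) (P.eval (t j : ℂ))) = 0 := by
  rcases Nat.eq_zero_or_pos r with h0 | hrpos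
  · subst h0
    have : P = 0 := by simpa [mem_degreeLT] using hP
    simp [this]
  have hPd : P.natDegree + 1 ≤ r := by
    rw [mem_degreeLT] at hP
    by_cases hP0 : P = 0
    · subst hP0; simp; omega
    · rw [degree_eq_natDegree hP0] at hP
      exact_mod_cast hP
  set g : ℂ[X] := (1 + C Complex.I * X) * (P * P.map (starRingEnd ℂ)) with hg
  have hgd : g.natDegree + 1 < s.card := by
    have h1 : (1 + C Complex.I * X : ℂ[X]).natDegree ≤ 1 := by
      compute_degree
    have h2 := natDegree_mul_le (p := (1 + C Complex.I * X : ℂ[X]))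
      (q := P * P.map (starRingEnd ℂ))
    have h3 := natDegree_mul_le (p := P) (q := P.map (starRingEnd ℂ))
    have h4 := natDegree_map_le (p := P) (f := starRingEnd ℂ)
    rw [← hg] at h2
    omega
  have hinj : Set.InjOn (fun j => (t j : ℂ)) s := by
    intro i hi j hj hij
    exact hm.injOn hi hj (Complex.ofReal_injective hij)
  have key := lag_annih s (fun j => (t j : ℂ)) hinj g hgd
  have : ∀ j ∈ s, (σ j : ℂ) * (|∏ l ∈ s.erase j, (t j - t l)|⁻¹ : ℝ) * (1 + t j * Complex.I) *
      (P.eval (t j : ℂ) * (starRingEnd ℂ) (P.eval (t j : ℂ))) =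
      - (g.eval (t j : ℂ) / ∏ l ∈ s.erase j, ((t j : ℂ) - t l)) := by
    intro j hj
    have e1 : (∏ l ∈ s.erase j, ((t j : ℂ) - t l)) = ((∏ l ∈ s.erase j, (t j - t l) : ℝ) : ℂ) := by
      push_cast; rfl
    have e2 : eval (t j : ℂ) (P.map (starRingEnd ℂ)) = (starRingEnd ℂ) (P.eval (t j : ℂ)) := by
      have := Polynomial.eval_map_apply (p := P) (f := starRingEnd ℂ) (x := (t j : ℂ))
      rwa [Complex.conj_ofReal] at this
    have e3 : g.eval (t j : ℂ) = (1 + t j * Complex.I) *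
      (P.eval (t j : ℂ) * (starRingEnd ℂ) (P.eval (t j : ℂ))) := by
      simp only [hg, eval_mul, eval_add, eval_one, eval_C, eval_X, e2]; ring
    rw [e1, e3, prod_sign s t hm j hj, hσ j hj]
    rw [← Finset.abs_prod, abs_mul, abs_pow, abs_neg, abs_one, one_pow, one_mul, abs_abs]
    rcases neg_one_pow_eq_or ℝ (s.filter (fun l => j < l)).card with h | h <;> rw [h] <;>
      push_cast <;> simp [div_eq_mul_inv] <;> ring
  rw [Finset.sum_congr rfl this, Finset.sum_neg_distrib, key, neg_zero]

lemma diag_core (n k : ℕ) (b : ℕ → ℂ) (hb : ∀ j < n, (b j).re ≠ 0)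
    (hmono : ∀ i j, i ≤ j → j < n → (b i).im / (b i).re ≤ (b j).im / (b j).re)
    (hopp : ∀ i < n, ∀ j < n, ∀ c : ℝ, 0 < c → b j ≠ -(c : ℂ) * b i)
    (hk : ((Finset.range n).filter (fun j => 0 < (b j).re)).card = k)
    (hmin : ∀ ω : ℂ, ω ≠ 0 → k ≤ ((Finset.range n).filter (fun j => 0 < (ω * b j).re)).card) :
    ∃ W : Submodule ℂ (Fin n → ℂ), k ≤ Module.finrank ℂ W ∧
      ∀ x ∈ W, ∑ j : Fin n, b j * (x j * (starRingEnd ℂ) (x j)) = 0 := by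
  classical
  obtain ⟨h2k, e, he, hchain⟩ := combi n k b hb hmono hopp hk hmin
  set t : ℕ → ℝ := fun j => (b j).im / (b j).re with ht
  set G : ℕ → Finset ℕ := fun l => (Finset.range n).filter (fun j => e j = l) with hG
  set r : ℕ → ℕ := fun l => ((G l).card - 1) / 2 with hr
  have hcard : ∀ l ∈ Finset.Ico k (n - k), (G l).card = 2 * r l + 1 := by
    intro l hl
    obtain ⟨m, hm⟩ := (hchain l hl).1
    have hm' : (G l).card = 2 * m + 1 := hm
    simp only [hr]; omega
  have hsum : ∑ l ∈ Finset.Ico k (n - k), r l = k := by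
    have h1 : (Finset.range n).card = ∑ l ∈ Finset.Ico k (n - k), (G l).card :=
      Finset.card_eq_sum_card_fiberwise (fun j hj => he j (by simpa using hj))
    rw [Finset.sum_congr rfl hcard, Finset.sum_add_distrib, ← Finset.mul_sum] at h1
    simp at h1
    omega
  obtain ⟨c, hc⟩ : ∃ c : ℕ → ℝ, ∀ j, c j =
      Real.sqrt (|∏ l ∈ (G (e j)).erase j, (t j - t l)|⁻¹ * |(b j).re|⁻¹) := ⟨_, fun _ => rfl⟩
  have hmemG : ∀ j < n, j ∈ G (e j) := fun j hj => by simp [hG, hj]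
  have hinj : ∀ l ∈ Finset.Ico k (n - k), Set.InjOn t (G l) :=
    fun l hl => (hchain l hl).2.1.injOn
  have hcsq : ∀ j, c j * c j =
      |∏ l ∈ (G (e j)).erase j, (t j - t l)|⁻¹ * |(b j).re|⁻¹ := by
    intro j; rw [hc, Real.mul_self_sqrt (by positivity)]
  have hcne : ∀ j < n, c j ≠ 0 := by
    intro j hj h0
    have := hcsq j
    rw [h0, mul_zero] at this
    have h1 : (∏ l ∈ (G (e j)).erase j, (t j - t l)) ≠ 0 := by
      rw [Finset.prod_ne_zero_iff]
      intro l hl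
      rw [Finset.mem_erase] at hl
      intro h
      exact hl.1 (hinj _ (he j hj) hl.2 (hmemG j hj) (sub_eq_zero.1 h).symm)
    have h2 := hb j hj
    have h3 : |∏ l ∈ (G (e j)).erase j, (t j - t l)|⁻¹ * |(b j).re|⁻¹ ≠ 0 := by
      positivity
    exact h3 this.symm
  let Φ : ((l : Finset.Ico k (n - k)) → degreeLT ℂ (r l)) →ₗ[ℂ] (Fin n → ℂ) :=
    { toFun := fun P j => (c j : ℂ) *
        ((P ⟨e j, he j j.2⟩ : degreeLT ℂ _) : ℂ[X]).eval (t j : ℂ)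
      map_add' := by intro P Q; ext j; simp [mul_add]
      map_smul' := by intro a P; ext j; simp; ring }
  have hΦ : ∀ P j, Φ P j = (c j : ℂ) *
        ((P ⟨e j, he j j.2⟩ : degreeLT ℂ _) : ℂ[X]).eval (t j : ℂ) := fun _ _ => rfl
  have hΦinj : Function.Injective Φ := by
    rw [injective_iff_map_eq_zero]
    intro P hP
    funext l
    obtain ⟨l, hl⟩ := l
    apply Subtype.ext
    show ((P ⟨l, hl⟩ : degreeLT ℂ _) : ℂ[X]) = 0
    refine Polynomial.eq_zero_of_degree_lt_of_eval_index_eq_zero (s := G l)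
      (v := fun j => (t j : ℂ)) ?_ ?_ ?_
    · intro i hi j hj hij
      exact hinj l hl hi hj (Complex.ofReal_injective hij)
    · refine lt_of_lt_of_le (mem_degreeLT.1 (P ⟨l, hl⟩).2) ?_
      have := hcard l hl
      exact_mod_cast (by omega : r l ≤ (G l).card)
    · intro j hj
      have hj' : j < n ∧ e j = l := by simpa [hG] using hj
      obtain ⟨hjn, rfl⟩ := hj'
      have h1 := congrFun hP ⟨j, hjn⟩
      rw [hΦ] at h1
      have h3 : (c j : ℂ) ≠ 0 := by exact_mod_cast hcne j hjn
      simpa [h3] using h1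
  refine ⟨LinearMap.range Φ, ?_, ?_⟩
  · rw [LinearMap.finrank_range_of_inj hΦinj, Module.finrank_pi_fintype]
    have : ∀ m, Module.finrank ℂ (degreeLT ℂ m) = m := by
      intro m
      rw [(degreeLTEquiv ℂ m).finrank_eq]; simp
    simp only [this]
    rw [Finset.sum_coe_sort (Finset.Ico k (n - k)) r, hsum]
  · rintro _ ⟨P, rfl⟩
    let Q : ℕ → ℂ[X] := fun l => if h : l ∈ Finset.Ico k (n - k) then (P ⟨l, h⟩ : ℂ[X]) else 0
    have hQ : ∀ j : Fin n, Φ P j = (c j : ℂ) * (Q (e j)).eval (t j : ℂ) := by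
      intro j
      rw [hΦ]
      simp only [Q, dif_pos (he j j.2)]
    simp only [hQ]
    rw [Fin.sum_univ_eq_sum_range (fun j => b j * ((c j : ℂ) * (Q (e j)).eval (t j : ℂ) *
      (starRingEnd ℂ) ((c j : ℂ) * (Q (e j)).eval (t j : ℂ)))) n]
    rw [← Finset.sum_fiberwise_of_maps_to (s := Finset.range n) (t := Finset.Ico k (n - k)) (g := e)
      (fun j hj => he j (by simpa using hj))]
    apply Finset.sum_eq_zero
    intro l hl
    have hQl : Q l ∈ degreeLT ℂ (r l) := by
      simp only [Q, dif_pos hl]; exact (P ⟨l, hl⟩).2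
    have key := chain_zero (G l) t (hchain l hl).2.1 (r l) (hcard l hl) (Q l) hQl
      (fun j => -(-1) ^ ((G l).filter (fun i => j < i)).card) (fun _ _ => rfl)
    rw [← key]
    apply Finset.sum_congr rfl
    intro j hj
    have hj' : j < n ∧ e j = l := by simpa using hj
    have hbj := hb j hj'.1
    have hsgn := (hchain l hl).2.2 j hj
    have h1 : ((c j : ℂ)) * (c j : ℂ) =
        ((|∏ i ∈ (G l).erase j, (t j - t i)|⁻¹ * |(b j).re|⁻¹ : ℝ) : ℂ) := by
      rw [← hj'.2, ← hcsq]; push_cast; ring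
    have h2 : b j = ((b j).re : ℂ) * (1 + t j * Complex.I) := by
      apply Complex.ext
      · simp
      · simp [ht]; field_simp
    have h3 : (-(-1) ^ ((G l).filter (fun i => j < i)).card : ℝ) = (b j).re * |(b j).re|⁻¹ := by
      rcases lt_or_gt_of_ne hbj with h | h
      · rw [(hsgn.2 h).neg_one_pow, abs_of_neg h]; field_simp
      · have h' : ¬ Even ((G l).filter (fun i => j < i)).card := fun hh => by
          have := hsgn.1 hh; linarith
        rw [(Nat.not_even_iff_odd.1 h').neg_one_pow, abs_of_pos h]; field_simp
    rw [hj'.2, h3, map_mul, Complex.conj_ofReal]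
    calc _ = b j * ((c j : ℂ) * c j) * ((Q l).eval (t j : ℂ) *
              (starRingEnd ℂ) ((Q l).eval (t j : ℂ))) := by ring
      _ = _ := by
        rw [h1]; nth_rewrite 1 [h2]; push_cast; ring

lemma perturb {ι : Type*} [Fintype ι] (a : ι → ℂ)
    (hopp : ∀ i j, ∀ c : ℝ, 0 < c → a j ≠ -(c : ℂ) * a i) (S : Finset ℂ) (hS : ∀ f ∈ S, f ≠ 0)
    (w : ℂ) (hw : w ≠ 0) :
    ∃ ω : ℂ, ω ≠ 0 ∧ (∀ f ∈ S, (ω * f).re ≠ 0) ∧ ∀ i, 0 < (ω * a i).re → 0 < (w * a i).re := by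
  classical
  obtain ⟨δ, hδ, hδa⟩ : ∃ δ : ℝ, δ ≠ 0 ∧ ∀ i, (w * a i).re = 0 → 0 ≤ δ * (w * a i).im := by
    by_cases h : ∃ i, (w * a i).re = 0 ∧ 0 < (w * a i).im
    · obtain ⟨i, hi, hi'⟩ := h
      refine ⟨1, one_ne_zero, fun j hj => ?_⟩
      by_contra hc
      rw [one_mul, not_le] at hc
      refine hopp i j (-(w * a j).im / (w * a i).im) (div_pos (by linarith) hi') ?_
      apply mul_left_cancel₀ hw
      obtain ⟨c, hcd⟩ : ∃ c : ℝ, c = -(w * a j).im / (w * a i).im := ⟨_, rfl⟩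
      have hc' : (w * a j).im = -c * (w * a i).im := by rw [hcd]; field_simp
      rw [← hcd]
      have : w * (-(c : ℂ) * a i) = -(c : ℂ) * (w * a i) := by ring
      rw [this]
      generalize w * a i = z at *
      generalize w * a j = y at *
      apply Complex.ext
      · simp [hi, hj]
      · simp [hc']
    · push Not at h
      refine ⟨-1, by norm_num, fun j hj => ?_⟩
      have := h j hj
      linarith
  have hval : ∀ (ε : ℝ) (z : ℂ), (w * (1 + (δ * ε : ℝ) * Complex.I) * z).re =
      (w * z).re - ε * (δ * (w * z).im) := by
    intro ε z
    have : w * (1 + (δ * ε : ℝ) * Complex.I) * z = (w * z) * (1 + (δ * ε : ℝ) * Complex.I) := by ring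
    rw [this]
    generalize w * z = y
    rw [Complex.mul_re]
    simp; ring
  have hcont : ∀ z : ℂ, Filter.Tendsto (fun ε : ℝ => (w * z).re - ε * (δ * (w * z).im))
      (nhdsWithin 0 (Set.Ioi 0)) (nhds (w * z).re) := by
    intro z
    have : Continuous (fun ε : ℝ => (w * z).re - ε * (δ * (w * z).im)) := by fun_prop
    have h := this.tendsto 0
    simp only [zero_mul, sub_zero] at h
    exact h.mono_left nhdsWithin_le_nhds
  have hpos : ∀ᶠ ε : ℝ in nhdsWithin 0 (Set.Ioi 0), 0 < ε := eventually_mem_nhdsWithin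
  have h1 : ∀ᶠ ε : ℝ in nhdsWithin 0 (Set.Ioi 0), ∀ f ∈ S,
      (w * f).re - ε * (δ * (w * f).im) ≠ 0 := by
    rw [Filter.eventually_all_finset]
    intro f hf
    by_cases h0 : (w * f).re = 0
    · filter_upwards [hpos] with ε hε
      have him : (w * f).im ≠ 0 := by
        intro him
        exact mul_ne_zero hw (hS f hf) (Complex.ext h0 him)
      rw [h0, zero_sub, neg_ne_zero]
      exact mul_ne_zero hε.ne' (mul_ne_zero hδ him)
    · exact (hcont f).eventually_ne h0
  have h2 : ∀ᶠ ε : ℝ in nhdsWithin 0 (Set.Ioi 0), ∀ i,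
      0 < (w * a i).re - ε * (δ * (w * a i).im) → 0 < (w * a i).re := by
    rw [Filter.eventually_all]
    intro i
    rcases lt_trichotomy (w * a i).re 0 with h | h | h
    · filter_upwards [(hcont (a i)).eventually_lt_const h] with ε hε h'
      linarith
    · filter_upwards [hpos] with ε hε h'
      have := mul_nonneg hε.le (hδa i h)
      linarith
    · filter_upwards with ε _ using h
  obtain ⟨ε, hε1, hε2⟩ := (h1.and h2).exists
  refine ⟨w * (1 + (δ * ε : ℝ) * Complex.I), mul_ne_zero hw ?_, ?_, ?_⟩
  · intro h
    have := congrArg Complex.re h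
    simp at this
  · intro f hf; rw [hval]; exact hε1 f hf
  · intro i hi; rw [hval] at hi; exact hε2 i hi

section forms

variable {V : Type*} [AddCommGroup V] [Module ℂ V]

/-- The half-plane condition on `U`, up to finitely many directions. -/
def PC (B : V →ₗ⋆[ℂ] V →ₗ[ℂ] ℂ) (U : Submodule ℂ V) (k : ℕ) : Prop :=
  ∃ F : Finset ℂ, (∀ f ∈ F, f ≠ 0) ∧ ∀ ω : ℂ, ω ≠ 0 → (∀ f ∈ F, (ω * f).re ≠ 0) →
    ∃ W : Submodule ℂ V, W ≤ U ∧ k ≤ Module.finrank ℂ W ∧ ∀ x ∈ W, 0 ≤ (ω * B x x).re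

/-- eigenvector of the pencil on `U` -/
def Eig (B : V →ₗ⋆[ℂ] V →ₗ[ℂ] ℂ) (U : Submodule ℂ V) (x : V) (α β : ℂ) : Prop :=
  x ∈ U ∧ x ≠ 0 ∧ (α ≠ 0 ∨ β ≠ 0) ∧ ∀ y ∈ U, α * B y x + β * (starRingEnd ℂ) (B x y) = 0

variable (B : V →ₗ⋆[ℂ] V →ₗ[ℂ] ℂ)

/-- `y ↦ conj (B y x)` as a linear functional -/
def conjFlip (x : V) : V →ₗ[ℂ] ℂ where
  toFun y := (starRingEnd ℂ) (B y x)
  map_add' := by intro y z; simp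
  map_smul' := by intro c y; simp

lemma conjFlip_apply (x y : V) : conjFlip B x y = (starRingEnd ℂ) (B y x) := rfl

variable [FiniteDimensional ℂ V]

lemma finrank_inf_ker (U : Submodule ℂ V) (f : V →ₗ[ℂ] ℂ) :
    Module.finrank ℂ U ≤ Module.finrank ℂ (U ⊓ LinearMap.ker f : Submodule ℂ V) + 1 := by
  have h1 := Submodule.finrank_sup_add_finrank_inf_eq U (LinearMap.ker f)
  have h2 := LinearMap.finrank_range_add_finrank_ker f
  have h3 : Module.finrank ℂ (LinearMap.range f) ≤ 1 := by
    simpa using Submodule.finrank_le (LinearMap.range f)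
  have h4 := Submodule.finrank_le (U ⊔ LinearMap.ker f)
  omega

lemma exists_eig (U : Submodule ℂ V) (hU : 0 < Module.finrank ℂ U) :
    ∃ x α β, Eig B U x α β := by
  classical
  obtain ⟨d, hd⟩ : ∃ d, d = Module.finrank ℂ U := ⟨_, rfl⟩
  let u := Module.finBasisOfFinrankEq ℂ U hd.symm
  let M : Matrix (Fin d) (Fin d) ℂ := fun i j => B (u i : V) (u j : V)
  have : Nonempty (Fin d) := ⟨⟨0, by omega⟩⟩
  obtain ⟨c, hc, α, β, hαβ, hcM⟩ : ∃ c : Fin d → ℂ, c ≠ 0 ∧ ∃ α β : ℂ, (α ≠ 0 ∨ β ≠ 0) ∧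
      α • (M *ᵥ c) + β • (Mᴴ *ᵥ c) = 0 := by
    by_cases hM : M.det = 0
    · obtain ⟨c, hc, h⟩ := Matrix.exists_mulVec_eq_zero_iff.2 hM
      exact ⟨c, hc, 1, 0, Or.inl one_ne_zero, by simp [h]⟩
    · obtain ⟨μ, hμ⟩ := Module.End.exists_eigenvalue (Matrix.toLin' (M⁻¹ * Mᴴ))
      obtain ⟨c, hc⟩ := hμ.exists_hasEigenvector
      refine ⟨c, hc.2, -μ, 1, Or.inr one_ne_zero, ?_⟩
      have h1 := hc.apply_eq_smul
      rw [Matrix.toLin'_apply] at h1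
      have h2 := congrArg (fun z => M *ᵥ z) h1
      simp only [Matrix.mulVec_mulVec, Matrix.mulVec_smul] at h2
      rw [Matrix.mul_nonsing_inv_cancel_left _ _ (isUnit_iff_ne_zero.2 hM)] at h2
      rw [h2]; simp
  refine ⟨((∑ j, c j • u j : U) : V), α, β, Submodule.coe_mem _, ?_, hαβ, ?_⟩
  · intro h
    apply hc
    have h0 : (∑ j, c j • u j : U) = 0 := by exact_mod_cast h
    have := Fintype.linearIndependent_iff.1 u.linearIndependent c h0
    funext j; exact this j
  · set x : V := ((∑ j, c j • u j : U) : V) with hx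
    have hx' : x = ∑ j, c j • (u j : V) := by rw [hx]; push_cast; rfl
    let L : V →ₗ[ℂ] ℂ := (starRingEnd ℂ α) • conjFlip B x + (starRingEnd ℂ β) • (B x)
    have hL : ∀ y, L y = (starRingEnd ℂ) (α * B y x + β * (starRingEnd ℂ) (B x y)) := by
      intro y; simp [L, conjFlip_apply]
    have hLu : L ∘ₗ U.subtype = 0 := by
      apply u.ext
      intro i
      have h1 := congrFun hcM i
      simp only [LinearMap.comp_apply, Submodule.subtype_apply, LinearMap.zero_apply, hL]
      rw [map_eq_zero]
      refine Eq.trans ?_ h1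
      rw [hx']
      simp only [Pi.add_apply, Pi.smul_apply, smul_eq_mul, Matrix.mulVec, dotProduct, M,
        map_sum, LinearMap.map_smulₛₗ, LinearMap.smul_apply,
        LinearMap.sum_apply]
      congr 2
      · apply Finset.sum_congr rfl; intro j _; rw [RingHom.id_apply]; ring
      · apply Finset.sum_congr rfl; intro j _
        simp only [map_mul, Complex.conj_conj]; rw [mul_comm]; rfl
    intro y hy
    have := LinearMap.congr_fun hLu ⟨y, hy⟩
    simp only [LinearMap.comp_apply, Submodule.subtype_apply, LinearMap.zero_apply, hL,
      map_eq_zero] at this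
    exact this

lemma orth_indep {d : ℕ} (v : Fin d → V) (horth : ∀ i j, i ≠ j → B (v i) (v j) = 0)
    (hne : ∀ i, B (v i) (v i) ≠ 0) : LinearIndependent ℂ v := by
  rw [Fintype.linearIndependent_iff]
  intro c hc i
  have := congrArg (B (v i)) hc
  rw [map_sum, Finset.sum_eq_single i] at this
  · simpa [hne i] using this
  · intro j _ hj; simp [horth i j hj.symm]
  · simp

lemma decomp (d : ℕ) : ∀ U : Submodule ℂ V, Module.finrank ℂ U = d →
    (∃ x α β, Eig B U x α β ∧ B x x = 0) ∨ ∃ v : Fin d → V, (∀ i, v i ∈ U) ∧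
      (∀ i j, i ≠ j → B (v i) (v j) = 0) ∧ ∀ i, B (v i) (v i) ≠ 0 := by
  induction d with
  | zero => intro U _; exact Or.inr ⟨Fin.elim0, fun i => i.elim0, fun i => i.elim0, fun i => i.elim0⟩
  | succ d ih =>
    intro U hU
    obtain ⟨x, α, β, hx, hx0, hαβ, heig⟩ := exists_eig B U (by omega)
    by_cases hz : B x x = 0
    · exact Or.inl ⟨x, α, β, ⟨hx, hx0, hαβ, heig⟩, hz⟩
    have hzz := heig x hx
    have hz' : (starRingEnd ℂ) (B x x) ≠ 0 := by simpa using hz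
    have hα : α ≠ 0 := by
      rintro rfl
      rcases hαβ with h | h
      · exact h rfl
      · simp [h, hz] at hzz
    have hsym : ∀ y ∈ U, B x y = 0 → B y x = 0 := by
      intro y hy h
      have := heig y hy
      simpa [h, hα] using this
    set U' : Submodule ℂ V := U ⊓ LinearMap.ker (B x) with hU'
    have hU'm : ∀ y, y ∈ U' ↔ y ∈ U ∧ B x y = 0 := by intro y; simp [hU']
    have hfr : Module.finrank ℂ U' = d := by
      have h1 := finrank_inf_ker U (B x)
      rw [← hU'] at h1
      have h2 : U' < U := by
        refine lt_of_le_of_ne inf_le_left ?_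
        intro h
        rw [← h] at hx
        exact hz ((hU'm x).1 hx).2
      have h3 := Submodule.finrank_lt_finrank_of_lt h2
      omega
    rcases ih U' hfr with ⟨x', α', β', ⟨hx', hx0', hαβ', heig'⟩, hz''⟩ | ⟨v, hv, horth, hne⟩
    · left
      refine ⟨x', α', β', ⟨((hU'm x').1 hx').1, hx0', hαβ', ?_⟩, hz''⟩
      intro y hy
      have e1 : B x x' = 0 := ((hU'm x').1 hx').2
      have e2 : B x' x = 0 := hsym x' ((hU'm x').1 hx').1 e1
      have hy' : y - (B x y / B x x) • x ∈ U' := by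
        rw [hU'm]
        refine ⟨U.sub_mem hy (U.smul_mem _ hx), ?_⟩
        simp [hz]
      have := heig' _ hy'
      simpa [e1, e2] using this
    · right
      refine ⟨Fin.cons x v, ?_, ?_, ?_⟩
      · intro i
        refine Fin.cases ?_ (fun i => ?_) i
        · simpa using hx
        · simpa using ((hU'm _).1 (hv i)).1
      · intro i j
        refine Fin.cases ?_ (fun i => ?_) i <;> refine Fin.cases ?_ (fun j => ?_) j
        · simp
        · intro _; simpa using ((hU'm _).1 (hv j)).2
        · intro _; simpa using hsym _ ((hU'm _).1 (hv i)).1 ((hU'm _).1 (hv i)).2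
        · intro h; simpa using horth i j (fun hh => h (by rw [hh]))
      · intro i
        refine Fin.cases ?_ (fun i => ?_) i
        · simpa using hz
        · simpa using hne i

lemma psd_kernel (ω : ℂ) (x y : V) (hxx : B x x = 0)
    (h : ∀ c : ℂ, 0 ≤ (ω * B (y + c • x) (y + c • x)).re) :
    ω * B y x + (starRingEnd ℂ) ω * (starRingEnd ℂ) (B x y) = 0 := by
  set K := ω * B y x + (starRingEnd ℂ) ω * (starRingEnd ℂ) (B x y) with hK
  have hform : ∀ c : ℂ, (ω * B (y + c • x) (y + c • x)).re = (ω * B y y).re + (c * K).re := by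
    intro c
    have e1 : ω * B (y + c • x) (y + c • x) =
        ω * B y y + c * (ω * B y x) + (starRingEnd ℂ) c * (ω * B x y) := by
      simp [hxx]; ring
    have e2 : ((starRingEnd ℂ) c * (ω * B x y)).re =
        (c * ((starRingEnd ℂ) ω * (starRingEnd ℂ) (B x y))).re := by
      rw [← Complex.conj_re]; simp
    rw [e1, Complex.add_re, Complex.add_re, e2, hK, mul_add, Complex.add_re]; ring
  by_contra hne
  have hpos : 0 < Complex.normSq K := Complex.normSq_pos.2 hne
  set s : ℝ := ((ω * B y y).re + 1) / Complex.normSq K with hs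
  have h1 := h (-(s : ℂ) * (starRingEnd ℂ) K)
  rw [hform] at h1
  have h2 : (-(s : ℂ) * (starRingEnd ℂ) K * K).re = -(s * Complex.normSq K) := by
    rw [mul_assoc, mul_comm ((starRingEnd ℂ) K) K, Complex.mul_conj]
    rw [← Complex.ofReal_neg, ← Complex.ofReal_mul, Complex.ofReal_re]; ring
  rw [h2, hs, div_mul_cancel₀ _ hpos.ne'] at h1
  linarith

lemma finrank_sup_span (W : Submodule ℂ V) (x : V) (hx : x ∉ W) :
    Module.finrank ℂ W + 1 ≤ Module.finrank ℂ (W ⊔ Submodule.span ℂ {x} : Submodule ℂ V) := by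
  apply Submodule.finrank_lt_finrank_of_lt
  refine lt_of_le_of_ne le_sup_left ?_
  intro h
  apply hx
  rw [h]
  exact Submodule.mem_sup_right (Submodule.mem_span_singleton_self x)

lemma reduction (U : Submodule ℂ V) (k : ℕ) (x : V) (α β : ℂ) (hE : Eig B U x α β)
    (hxx : B x x = 0) (hPC : PC B U (k + 1)) :
    ∃ M : Submodule ℂ V, M ≤ U ∧ Module.finrank ℂ M < Module.finrank ℂ U ∧ x ∉ M ∧
      (∀ y ∈ M, B x y = 0 ∧ B y x = 0) ∧ PC B M k := by
  classical
  obtain ⟨hx, hx0, hαβ, heig⟩ := hE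
  -- functional cutting out the orthogonal complement
  obtain ⟨f, hf⟩ : ∃ f : V →ₗ[ℂ] ℂ, ∀ y ∈ U, f y = 0 ↔ (B x y = 0 ∧ B y x = 0) := by
    by_cases hα : α = 0
    · have hβ : β ≠ 0 := by rcases hαβ with h | h; exact absurd hα h; exact h
      refine ⟨conjFlip B x, fun y hy => ?_⟩
      have := heig y hy
      simp only [hα, zero_mul, zero_add, mul_eq_zero, hβ, false_or, map_eq_zero] at this
      simp [conjFlip_apply, this]
    · refine ⟨B x, fun y hy => ?_⟩
      have := heig y hy
      constructor
      · intro h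
        refine ⟨h, ?_⟩
        simpa [h, hα] using this
      · exact fun h => h.1
  obtain ⟨h, hh⟩ : ∃ h : V →ₗ[ℂ] ℂ, h x ≠ 0 := by
    by_contra hc
    push Not at hc
    exact hx0 ((Module.forall_dual_apply_eq_zero_iff ℂ x).1 hc)
  have hmem : ∀ y, y ∈ U ⊓ LinearMap.ker f ↔ y ∈ U ∧ B x y = 0 ∧ B y x = 0 := by
    intro y
    rw [Submodule.mem_inf, LinearMap.mem_ker]
    exact and_congr_right (fun hy => hf y hy)
  have hxM : x ∉ U ⊓ LinearMap.ker f ⊓ LinearMap.ker h := by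
    intro hc
    exact hh (LinearMap.mem_ker.1 (Submodule.mem_inf.1 hc).2)
  have hle : U ⊓ LinearMap.ker f ⊓ LinearMap.ker h ≤ U := inf_le_left.trans inf_le_left
  refine ⟨U ⊓ LinearMap.ker f ⊓ LinearMap.ker h, hle, ?_, hxM, ?_, ?_⟩
  · apply Submodule.finrank_lt_finrank_of_lt
    refine lt_of_le_of_ne hle ?_
    intro hc
    rw [hc] at hxM
    exact hxM hx
  · intro y hy
    exact ((hmem y).1 (Submodule.mem_inf.1 hy).1).2
  · obtain ⟨F, hF, hW⟩ := hPC
    -- the exceptional direction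
    obtain ⟨G, hG, hGω⟩ : ∃ G : Finset ℂ, (∀ g ∈ G, g ≠ 0) ∧ ∀ ω : ℂ, ω ≠ 0 →
        (∀ g ∈ G, (ω * g).re ≠ 0) → α * (starRingEnd ℂ) ω - β * ω ≠ 0 := by
      by_cases hex : ∃ ω₀ : ℂ, ω₀ ≠ 0 ∧ α * (starRingEnd ℂ) ω₀ = β * ω₀
      · obtain ⟨ω₀, h0, h1⟩ := hex
        have hα : α ≠ 0 := by
          rintro rfl
          rw [zero_mul] at h1
          rcases hαβ with h | h
          · exact h rfl
          · exact mul_ne_zero h h0 h1.symm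
        refine ⟨{Complex.I * (starRingEnd ℂ) ω₀}, ?_, ?_⟩
        · intro g hg
          rw [Finset.mem_singleton] at hg
          subst hg
          simp [h0]
        · intro ω _ hω hc
          apply hω _ (Finset.mem_singleton_self _)
          have h2 : α * (starRingEnd ℂ) ω = β * ω := sub_eq_zero.1 hc
          have h3 : (starRingEnd ℂ) ω * ω₀ = (starRingEnd ℂ) ω₀ * ω := by
            apply mul_left_cancel₀ hα
            calc α * ((starRingEnd ℂ) ω * ω₀) = (α * (starRingEnd ℂ) ω) * ω₀ := by ring
              _ = (β * ω₀) * ω := by rw [h2]; ring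
              _ = _ := by rw [← h1]; ring
          have h4 := congrArg Complex.im h3
          simp only [Complex.mul_im, Complex.conj_re, Complex.conj_im] at h4
          simp [Complex.mul_re, Complex.mul_im]
          linarith
      · push Not at hex
        exact ⟨∅, by simp, fun ω hω _ hc => hex ω hω (sub_eq_zero.1 hc)⟩
    refine ⟨F ∪ G, ?_, ?_⟩
    · intro g hg
      rcases Finset.mem_union.1 hg with h | h
      · exact hF g h
      · exact hG g h
    · intro ω hω hgen
      obtain ⟨W, hWU, hWk, hWpos⟩ := hW ω hω (fun g hg => hgen g (Finset.mem_union_left _ hg))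
      have hdet := hGω ω hω (fun g hg => hgen g (Finset.mem_union_right _ hg))
      set S : Submodule ℂ V := W ⊓ LinearMap.ker f ⊔ Submodule.span ℂ {x} with hS
      have hSrank : k + 1 ≤ Module.finrank ℂ S := by
        by_cases hxW : x ∈ W
        · have hWf : W ≤ LinearMap.ker f := by
            intro y hy
            rw [LinearMap.mem_ker, hf y (hWU hy)]
            have e1 := psd_kernel B ω x y hxx
              (fun c => hWpos _ (W.add_mem hy (W.smul_mem c hxW)))
            have e2 := heig y (hWU hy)
            have e3 : (α * (starRingEnd ℂ) ω - β * ω) * B y x = 0 := by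
              linear_combination (starRingEnd ℂ) ω * e2 - β * e1
            have e4 : (α * (starRingEnd ℂ) ω - β * ω) * (starRingEnd ℂ) (B x y) = 0 := by
              linear_combination α * e1 - ω * e2
            have e5 := (mul_eq_zero.1 e3).resolve_left hdet
            have e6 := (mul_eq_zero.1 e4).resolve_left hdet
            exact ⟨by simpa using e6, e5⟩
          have : W ≤ S := by
            rw [hS, inf_eq_left.2 hWf]; exact le_sup_left
          exact hWk.trans (Submodule.finrank_mono this)
        · have h1 := finrank_sup_span (W ⊓ LinearMap.ker f) x
            (fun hc => hxW (Submodule.mem_inf.1 hc).1)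
          have h2 := finrank_inf_ker W f
          rw [← hS] at h1
          omega
      refine ⟨S ⊓ LinearMap.ker h, ?_, ?_, ?_⟩
      · refine inf_le_inf_right _ ?_
        rw [hS]
        refine sup_le (inf_le_inf_right _ hWU) ?_
        rw [Submodule.span_singleton_le_iff_mem, hmem]
        exact ⟨hx, hxx, hxx⟩
      · have := finrank_inf_ker S h
        omega
      · intro z hz
        obtain ⟨y, hy, w, hw, rfl⟩ := Submodule.mem_sup.1 (Submodule.mem_inf.1 hz).1
        obtain ⟨c, rfl⟩ := Submodule.mem_span_singleton.1 hw
        have hy1 := (Submodule.mem_inf.1 hy).1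
        have hy2 := (hf y (hWU hy1)).1 (LinearMap.mem_ker.1 (Submodule.mem_inf.1 hy).2)
        have : B (y + c • x) (y + c • x) = B y y := by
          simp [hxx, hy2.1, hy2.2]
        rw [this]
        exact hWpos y hy1

lemma B_sum {d : ℕ} (v : Fin d → V) (horth : ∀ i j, i ≠ j → B (v i) (v j) = 0) (x : Fin d → ℂ) :
    B (∑ i, x i • v i) (∑ i, x i • v i) =
      ∑ i, B (v i) (v i) * (x i * (starRingEnd ℂ) (x i)) := by
  simp only [map_sum, LinearMap.map_smulₛₗ, LinearMap.sum_apply, LinearMap.smul_apply,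
    RingHom.id_apply, smul_eq_mul]
  apply Finset.sum_congr rfl
  intro i _
  rw [Finset.sum_eq_single i]
  · ring
  · intro j _ hj
    rw [horth j i hj]; simp
  · simp

lemma diag_case (d k : ℕ) (U : Submodule ℂ V) (hU : Module.finrank ℂ U = d) (v : Fin d → V)
    (hv : ∀ i, v i ∈ U) (horth : ∀ i j, i ≠ j → B (v i) (v j) = 0)
    (hne : ∀ i, B (v i) (v i) ≠ 0)
    (hopp : ∀ i j, ∀ c : ℝ, 0 < c → B (v j) (v j) ≠ -(c : ℂ) * B (v i) (v i))
    (hPC : PC B U k) :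
    ∃ W : Submodule ℂ V, W ≤ U ∧ k ≤ Module.finrank ℂ W ∧ ∀ x ∈ W, B x x = 0 := by
  classical
  obtain ⟨F, hF, hW⟩ := hPC
  set a : Fin d → ℂ := fun i => B (v i) (v i) with ha
  let S : Finset ℂ := F ∪ Finset.univ.image a
  have hS : ∀ f ∈ S, f ≠ 0 := by
    intro f hf
    rcases Finset.mem_union.1 hf with h | h
    · exact hF f h
    · obtain ⟨i, _, rfl⟩ := Finset.mem_image.1 h
      exact hne i
  let cnt : ℂ → ℕ := fun ω => (Finset.univ.filter (fun i => 0 < (ω * a i).re)).card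
  let Gen : Set ℂ := {ω | ω ≠ 0 ∧ ∀ f ∈ S, (ω * f).re ≠ 0}
  have hpert : ∀ w : ℂ, w ≠ 0 → ∃ ω ∈ Gen, cnt ω ≤ cnt w := by
    intro w hw
    obtain ⟨ω, h1, h2, h3⟩ := perturb a hopp S hS w hw
    refine ⟨ω, ⟨h1, h2⟩, Finset.card_le_card ?_⟩
    intro i hi
    simp only [Finset.mem_filter, Finset.mem_univ, true_and] at hi ⊢
    exact h3 i hi
  have hGne : (cnt '' Gen).Nonempty := by
    obtain ⟨ω, h, _⟩ := hpert 1 one_ne_zero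
    exact ⟨_, ω, h, rfl⟩
  obtain ⟨ω₀, hω₀, hcnt⟩ := Nat.sInf_mem hGne
  have hmin : ∀ w : ℂ, w ≠ 0 → cnt ω₀ ≤ cnt w := by
    intro w hw
    obtain ⟨ω, h1, h2⟩ := hpert w hw
    rw [hcnt]
    exact (Nat.sInf_le (Set.mem_image_of_mem cnt h1)).trans h2
  have hω0 : ω₀ ≠ 0 := hω₀.1
  have hgen : ∀ i, (ω₀ * a i).re ≠ 0 := fun i => hω₀.2 _
    (Finset.mem_union_right _ (Finset.mem_image_of_mem a (Finset.mem_univ i)))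
  have hindep := orth_indep B v horth hne
  -- `k` is at most the count
  have hk : k ≤ cnt ω₀ := by
    obtain ⟨W, hWU, hWk, hWpos⟩ := hW ω₀ hω0 (fun f hf => hω₀.2 f (Finset.mem_union_left _ hf))
    let T := {i : Fin d // ¬ 0 < (ω₀ * a i).re}
    let vT : T → V := fun i => v i
    have hvT : LinearIndependent ℂ vT := hindep.comp _ Subtype.val_injective
    set N := Submodule.span ℂ (Set.range vT) with hN
    have hNr : Module.finrank ℂ N = Fintype.card T := finrank_span_eq_card hvT
    have hNU : N ≤ U := by
      rw [hN, Submodule.span_le]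
      rintro _ ⟨i, rfl⟩
      exact hv i
    have hdisj : W ⊓ N = ⊥ := by
      rw [eq_bot_iff]
      intro y hy
      obtain ⟨hyW, hyN⟩ := Submodule.mem_inf.1 hy
      obtain ⟨c, hc⟩ := (Submodule.mem_span_range_iff_exists_fun ℂ).1 hyN
      let c' : Fin d → ℂ := fun i => if h : ¬ 0 < (ω₀ * a i).re then c ⟨i, h⟩ else 0
      have hz : ∀ i, 0 < (ω₀ * a i).re → c' i = 0 := fun i h => dif_neg (not_not_intro h)
      have hs : ∑ i : {i : Fin d // 0 < (ω₀ * a i).re}, c' i • v i = 0 :=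
        Finset.sum_eq_zero (fun i _ => by rw [hz i i.2, zero_smul])
      have hy' : y = ∑ i, c' i • v i := by
        rw [← hc, ← Fintype.sum_subtype_add_sum_subtype (fun i => 0 < (ω₀ * a i).re)
          (fun i => c' i • v i), hs, zero_add]
        apply Finset.sum_congr rfl
        intro i _
        simp only [c', dif_pos i.2, vT]
        rfl
      have hq := hWpos y hyW
      rw [hy', B_sum B v horth, Finset.mul_sum, Complex.re_sum] at hq
      have hterm : ∀ i, (ω₀ * (B (v i) (v i) * (c' i * (starRingEnd ℂ) (c' i)))).re =
          (ω₀ * a i).re * Complex.normSq (c' i) := by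
        intro i
        rw [Complex.mul_conj, ← mul_assoc, Complex.re_mul_ofReal]
      have hle : ∀ i ∈ Finset.univ, (ω₀ * a i).re * Complex.normSq (c' i) ≤ 0 := by
        intro i _
        by_cases h : 0 < (ω₀ * a i).re
        · rw [hz i h]; simp
        · exact mul_nonpos_of_nonpos_of_nonneg (not_lt.1 h) (Complex.normSq_nonneg _)
      simp only [hterm] at hq
      have h0 := (Finset.sum_eq_zero_iff_of_nonpos hle).1
        (le_antisymm (Finset.sum_nonpos hle) hq)
      have hc0 : ∀ i, c' i = 0 := by
        intro i
        have := h0 i (Finset.mem_univ i)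
        rcases mul_eq_zero.1 this with h | h
        · exact absurd h (hgen i)
        · exact Complex.normSq_eq_zero.1 h
      rw [hy']
      simp [hc0]
    have h1 := Submodule.finrank_sup_add_finrank_inf_eq W N
    rw [hdisj, finrank_bot] at h1
    have h2 := Submodule.finrank_mono (sup_le hWU hNU)
    have h3 : Fintype.card T + cnt ω₀ = d := by
      have := Fintype.card_subtype_compl (fun i : Fin d => 0 < (ω₀ * a i).re)
      have h4 := Fintype.card_subtype_le (fun i : Fin d => 0 < (ω₀ * a i).re)
      have h5 : Fintype.card {i : Fin d // 0 < (ω₀ * a i).re} = cnt ω₀ := Fintype.card_subtype _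
      have h6 : Fintype.card T = _ := this
      rw [Fintype.card_fin] at h6 h4
      omega
    omega
  -- sort
  let σ := Tuple.sort (fun i => (ω₀ * a i).im / (ω₀ * a i).re)
  have hσ := Tuple.monotone_sort (fun i => (ω₀ * a i).im / (ω₀ * a i).re)
  let b : ℕ → ℂ := fun j => if h : j < d then ω₀ * a (σ ⟨j, h⟩) else 0
  have hbv : ∀ j (h : j < d), b j = ω₀ * a (σ ⟨j, h⟩) := fun j h => by simp only [b, dif_pos h]
  have hcount : ∀ ω : ℂ, ((Finset.range d).filter (fun j => 0 < (ω * b j).re)).card =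
      cnt (ω * ω₀) := by
    intro ω
    simp only [cnt]
    rw [Finset.card_filter, Finset.card_filter, Finset.sum_range,
      ← Equiv.sum_comp σ (fun i => if 0 < (ω * ω₀ * a i).re then 1 else 0)]
    apply Finset.sum_congr rfl
    intro i _
    rw [hbv i i.2, mul_assoc]
  obtain ⟨W, hWk, hWz⟩ := diag_core d (cnt ω₀) b
    (fun j hj => by rw [hbv j hj]; exact hgen _)
    (fun i j hij hj => by
      rw [hbv i (by omega), hbv j hj]
      exact hσ (show (⟨i, by omega⟩ : Fin d) ≤ ⟨j, hj⟩ from hij))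
    (fun i hi j hj c hc heq => by
      rw [hbv i hi, hbv j hj] at heq
      refine hopp (σ ⟨i, hi⟩) (σ ⟨j, hj⟩) c hc ?_
      apply mul_left_cancel₀ hω0
      refine heq.trans ?_
      ring)
    (by have := hcount 1; simpa using this)
    (fun ω hω => by rw [hcount]; exact hmin _ (mul_ne_zero hω hω0))
  have hindσ : LinearIndependent ℂ (v ∘ σ) := hindep.comp _ σ.injective
  let Ψ : (Fin d → ℂ) →ₗ[ℂ] V := Fintype.linearCombination ℂ (v ∘ σ)
  have hΨ : ∀ x, Ψ x = ∑ i, x i • (v ∘ σ) i := fun x => rfl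
  have hΨinj : Function.Injective Ψ := by
    rw [injective_iff_map_eq_zero]
    intro x hx
    funext i
    exact Fintype.linearIndependent_iff.1 hindσ x hx i
  refine ⟨W.map Ψ, ?_, ?_, ?_⟩
  · rintro _ ⟨x, _, rfl⟩
    rw [hΨ]
    exact U.sum_mem (fun i _ => U.smul_mem _ (hv _))
  · rw [← (Submodule.equivMapOfInjective Ψ hΨinj W).finrank_eq]
    omega
  · rintro _ ⟨x, hx, rfl⟩
    rw [hΨ, B_sum B (v ∘ σ) (fun i j hij => horth _ _ (fun h => hij (σ.injective h)))]
    have := hWz x hx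
    apply mul_left_cancel₀ hω0
    rw [mul_zero, ← this, Finset.mul_sum]
    apply Finset.sum_congr rfl
    intro i _
    rw [hbv i i.2]
    simp only [ha, Function.comp]
    ring

theorem main_forms (d : ℕ) : ∀ (U : Submodule ℂ V) (k : ℕ), Module.finrank ℂ U = d →
    PC B U k → ∃ W : Submodule ℂ V, W ≤ U ∧ k ≤ Module.finrank ℂ W ∧ ∀ x ∈ W, B x x = 0 := by
  induction d using Nat.strong_induction_on with
  | _ d ih =>
    intro U k hU hPC
    rcases k with _ | k
    · exact ⟨⊥, bot_le, by simp, by simp⟩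
    have hred : (∃ x α β, Eig B U x α β ∧ B x x = 0) →
        ∃ W : Submodule ℂ V, W ≤ U ∧ k + 1 ≤ Module.finrank ℂ W ∧ ∀ x ∈ W, B x x = 0 := by
      rintro ⟨x, α, β, hE, hxx⟩
      obtain ⟨M, hMU, hMr, hxM, hMo, hMP⟩ := reduction B U k x α β hE hxx hPC
      obtain ⟨W, hWM, hWk, hWz⟩ := ih _ (hU ▸ hMr) M k rfl hMP
      refine ⟨W ⊔ Submodule.span ℂ {x}, ?_, ?_, ?_⟩
      · refine sup_le (hWM.trans hMU) ?_
        rw [Submodule.span_singleton_le_iff_mem]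
        exact hE.1
      · have := finrank_sup_span W x (fun h => hxM (hWM h))
        omega
      · intro z hz
        obtain ⟨y, hy, w, hw, rfl⟩ := Submodule.mem_sup.1 hz
        obtain ⟨c, rfl⟩ := Submodule.mem_span_singleton.1 hw
        have h1 := hMo y (hWM hy)
        simp [hxx, h1.1, h1.2, hWz y hy]
    rcases decomp B d U hU with h | ⟨v, hv, horth, hne⟩
    · exact hred h
    by_cases hopp : ∀ i j, ∀ c : ℝ, 0 < c → B (v j) (v j) ≠ -(c : ℂ) * B (v i) (v i)
    · exact diag_case B d (k + 1) U hU v hv horth hne hopp hPC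
    · push Not at hopp
      obtain ⟨i, j, c, hc, hij⟩ := hopp
      have hind := orth_indep B v horth hne
      have hijne : i ≠ j := by
        rintro rfl
        have h1 : ((1 + c : ℝ) : ℂ) * B (v i) (v i) = 0 := by
          push_cast; linear_combination hij
        rcases mul_eq_zero.1 h1 with h | h
        · have : (1 + c : ℝ) = 0 := by exact_mod_cast h
          linarith
        · exact hne i h
      have hspan : Submodule.span ℂ (Set.range v) = U := by
        apply Submodule.eq_of_le_of_finrank_eq
        · rw [Submodule.span_le]; rintro _ ⟨i, rfl⟩; exact hv i
        · rw [finrank_span_eq_card hind, hU]; simp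
      obtain ⟨r, hrc, hconj⟩ : ∃ r : ℂ, r * r = c ∧ (starRingEnd ℂ) r = r :=
        ⟨(Real.sqrt c : ℂ), by exact_mod_cast Real.mul_self_sqrt hc.le, Complex.conj_ofReal _⟩
      have hij0 := horth i j hijne
      have hji0 := horth j i hijne.symm
      apply hred
      refine ⟨r • v i + v j, (starRingEnd ℂ) (B (v i) (v i)), -(B (v i) (v i)),
        ⟨?_, ?_, ?_, ?_⟩, ?_⟩
      · exact U.add_mem (U.smul_mem _ (hv i)) (hv j)
      · intro h
        have := congrArg (B (v j)) h
        simp [hji0, hne j] at this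
      · right; simpa using hne i
      · intro y hy
        rw [← hspan] at hy
        induction hy using Submodule.span_induction with
        | mem y hy =>
          obtain ⟨l, rfl⟩ := hy
          by_cases h1 : l = i
          · subst h1; simp [hij0, hji0, hconj]; ring
          · by_cases h2 : l = j
            · subst h2; simp [hij0, hji0, hij]; try ring
            · simp [horth l i h1, horth l j h2, horth i l (Ne.symm h1), horth j l (Ne.symm h2)]
        | zero => simp
        | add y z _ _ hy hz =>
          simp only [map_add, LinearMap.add_apply] at hy hz ⊢
          linear_combination hy + hz
        | smul t y _ hy =>
          simp only [LinearMap.map_smulₛₗ, LinearMap.smul_apply, smul_eq_mul, map_mul, RingHom.id_apply] at hy ⊢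
          linear_combination (starRingEnd ℂ) t * hy
      · simp [hij0, hji0, hij, hconj]
        linear_combination (B (v i) (v i)) * hrc

end forms

section final

variable {n : ℕ}

lemma inner_cols {k : ℕ} (A : Matrix (Fin n) (Fin n) ℂ) (V : Matrix (Fin n) (Fin k) ℂ)
    (i j : Fin k) :
    (Vᴴ * A * V) i j = inner ℂ (WithLp.toLp 2 (fun l => V l i) : EuclideanSpace ℂ (Fin n))
      (Matrix.toEuclideanLin A (WithLp.toLp 2 (fun l => V l j))) := by
  rw [Matrix.mul_assoc]
  simp only [Matrix.mul_apply, PiLp.inner_apply, Matrix.toLpLin_apply, Matrix.mulVec, dotProduct,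
    Matrix.conjTranspose_apply, RCLike.inner_apply]
  apply Finset.sum_congr rfl
  intro l _
  rw [mul_comm]
  rfl

lemma inner_cols_one {k : ℕ} (V : Matrix (Fin n) (Fin k) ℂ) (i j : Fin k) :
    (Vᴴ * V) i j = inner ℂ (WithLp.toLp 2 (fun l => V l i) : EuclideanSpace ℂ (Fin n))
      (WithLp.toLp 2 (fun l => V l j)) := by
  simp only [Matrix.mul_apply, PiLp.inner_apply,
    Matrix.conjTranspose_apply, RCLike.inner_apply]
  apply Finset.sum_congr rfl
  intro l _
  rw [mul_comm]
  rfl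

lemma polar_zero (T : EuclideanSpace ℂ (Fin n) →ₗ[ℂ] EuclideanSpace ℂ (Fin n))
    (W : Submodule ℂ (EuclideanSpace ℂ (Fin n))) (h : ∀ x ∈ W, inner ℂ x (T x) = 0)
    (x y : EuclideanSpace ℂ (Fin n)) (hx : x ∈ W) (hy : y ∈ W) : inner ℂ x (T y) = 0 := by
  have h1 := h _ (W.add_mem hx hy)
  have h2 := h _ (W.add_mem hx (W.smul_mem Complex.I hy))
  simp only [map_add, map_smul, inner_add_left, inner_add_right, inner_smul_left,
    inner_smul_right, h x hx, h y hy, Complex.conj_I] at h1 h2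
  have h3 : Complex.I * (inner ℂ x (T y) - inner ℂ y (T x)) = 0 := by linear_combination h2
  have h4 := (mul_eq_zero.1 h3).resolve_left Complex.I_ne_zero
  have h5 : (2 : ℂ) * inner ℂ x (T y) = 0 := by linear_combination h1 + h4
  exact (mul_eq_zero.1 h5).resolve_left two_ne_zero

lemma dil_iff (A : Matrix (Fin n) (Fin n) ℂ) (k : ℕ) :
    (∃ V : Matrix (Fin n) (Fin k) ℂ, Vᴴ * V = 1 ∧ Vᴴ * A * V = 0) ↔
    ∃ W : Submodule ℂ (EuclideanSpace ℂ (Fin n)), Module.finrank ℂ W = k ∧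
      ∀ x ∈ W, inner ℂ x (Matrix.toEuclideanLin A x) = 0 := by
  constructor
  · rintro ⟨V, h1, h2⟩
    set v : Fin k → EuclideanSpace ℂ (Fin n) := fun j => WithLp.toLp 2 (fun l => V l j) with hv
    have ho : Orthonormal ℂ v := by
      rw [orthonormal_iff_ite]
      intro i j
      rw [hv, ← inner_cols_one, h1, Matrix.one_apply]
    have hz : ∀ i j, inner ℂ (v i) (Matrix.toEuclideanLin A (v j)) = 0 := by
      intro i j
      rw [hv, ← inner_cols, h2]
      rfl
    refine ⟨Submodule.span ℂ (Set.range v), ?_, ?_⟩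
    · rw [finrank_span_eq_card ho.linearIndependent, Fintype.card_fin]
    · intro x hx
      obtain ⟨c, rfl⟩ := (Submodule.mem_span_range_iff_exists_fun ℂ).1 hx
      simp only [map_sum, map_smul, sum_inner, inner_sum, inner_smul_left, inner_smul_right, hz]
      simp
  · rintro ⟨W, rfl, hW⟩
    let b := stdOrthonormalBasis ℂ W
    refine ⟨Matrix.of fun l j => (b j : EuclideanSpace ℂ (Fin n)) l, ?_, ?_⟩
    · ext i j
      rw [inner_cols_one, Matrix.one_apply]
      exact (orthonormal_iff_ite.1 b.orthonormal) i j
    · ext i j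
      rw [inner_cols]
      exact polar_zero _ W hW _ _ (b i).2 (b j).2

lemma zdi_bdd (A : Matrix (Fin n) (Fin n) ℂ) :
    BddAbove {k : ℕ | ∃ V : Matrix (Fin n) (Fin k) ℂ, Vᴴ * V = 1 ∧ Vᴴ * A * V = 0} := by
  refine ⟨n, ?_⟩
  intro k hk
  obtain ⟨W, rfl, -⟩ := (dil_iff A k).1 hk
  have := Submodule.finrank_le W
  rwa [finrank_euclideanSpace_fin] at this

lemma zdi_ge (A : Matrix (Fin n) (Fin n) ℂ) (W : Submodule ℂ (EuclideanSpace ℂ (Fin n)))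
    (hW : ∀ x ∈ W, inner ℂ x (Matrix.toEuclideanLin A x) = 0) :
    Module.finrank ℂ W ≤ zdi A :=
  le_csSup (zdi_bdd A) ((dil_iff A _).2 ⟨W, rfl, hW⟩)

lemma zdi_attained (A : Matrix (Fin n) (Fin n) ℂ) :
    ∃ W : Submodule ℂ (EuclideanSpace ℂ (Fin n)), Module.finrank ℂ W = zdi A ∧
      ∀ x ∈ W, inner ℂ x (Matrix.toEuclideanLin A x) = 0 := by
  have h := Nat.sSup_mem ⟨0, (dil_iff A 0).2 ⟨⊥, finrank_bot _ _, by simp⟩⟩ (zdi_bdd A)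
  exact (dil_iff A _).1 h

lemma inner_matRe (A : Matrix (Fin n) (Fin n) ℂ) (x : EuclideanSpace ℂ (Fin n)) :
    inner ℂ x (Matrix.toEuclideanLin (matRe A) x) =
      (((inner ℂ x (Matrix.toEuclideanLin A x) : ℂ).re : ℝ) : ℂ) := by
  rw [matRe, map_smul, map_add, Matrix.toEuclideanLin_conjTranspose_eq_adjoint]
  simp only [LinearMap.smul_apply, LinearMap.add_apply, inner_smul_right, inner_add_right,
    LinearMap.adjoint_inner_right]
  rw [← inner_conj_symm (Matrix.toEuclideanLin A x) x, Complex.add_conj]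
  push_cast
  ring

noncomputable def matForm (A : Matrix (Fin n) (Fin n) ℂ) :
    EuclideanSpace ℂ (Fin n) →ₗ⋆[ℂ] EuclideanSpace ℂ (Fin n) →ₗ[ℂ] ℂ :=
  (innerₛₗ ℂ).compl₂ (Matrix.toEuclideanLin A)

lemma matForm_apply (A : Matrix (Fin n) (Fin n) ℂ) (x y : EuclideanSpace ℂ (Fin n)) :
    matForm A x y = inner ℂ x (Matrix.toEuclideanLin A y) := rfl

lemma zdi_le_re (A : Matrix (Fin n) (Fin n) ℂ) (c : ℂ) : zdi A ≤ zdi (matRe (c • A)) := by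
  obtain ⟨W, h, hW⟩ := zdi_attained A
  rw [← h]
  apply zdi_ge
  intro x hx
  rw [inner_matRe, map_smul, LinearMap.smul_apply, inner_smul_right, hW x hx]
  simp

lemma zdi_ge_of_forall (A : Matrix (Fin n) (Fin n) ℂ) (m : ℕ)
    (h : ∀ θ : ℝ, m ≤ zdi (matRe (Complex.exp (-(θ : ℂ) * Complex.I) • A))) : m ≤ zdi A := by
  have hPC : PC (matForm A) ⊤ m := by
    refine ⟨∅, by simp, ?_⟩
    intro ω hω _
    obtain ⟨W, hk, hW⟩ := zdi_attained
      (matRe (Complex.exp (-((-Complex.arg ω : ℝ) : ℂ) * Complex.I) • A))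
    refine ⟨W, le_top, ?_, ?_⟩
    · rw [hk]; exact h _
    · intro x hx
      have h1 := hW x hx
      rw [inner_matRe, map_smul, LinearMap.smul_apply, inner_smul_right] at h1
      have h2 := Complex.ofReal_eq_zero.1 h1
      rw [matForm_apply]
      have h3 : ω = (‖ω‖ : ℂ) * Complex.exp (-((-Complex.arg ω : ℝ) : ℂ) * Complex.I) := by
        conv_lhs => rw [← Complex.norm_mul_exp_arg_mul_I ω]
        push_cast
        rw [neg_neg]
      rw [h3, mul_assoc, Complex.re_ofReal_mul, h2, mul_zero]
  obtain ⟨W, -, hk, hW⟩ := main_forms (matForm A) _ ⊤ m rfl hPC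
  exact hk.trans (zdi_ge A W hW)

end final

/-- Corollary 2.4. -/
theorem zdi_eq_min_zdi_re {n : ℕ} (A : Matrix (Fin n) (Fin n) ℂ) :
    ∃ θ₀ : ℝ, zdi A = zdi (matRe (Complex.exp (-(θ₀ : ℂ) * Complex.I) • A)) ∧
      ∀ θ : ℝ, zdi A ≤ zdi (matRe (Complex.exp (-(θ : ℂ) * Complex.I) • A)) := by
  obtain ⟨θ₀, hθ₀⟩ := Nat.sInf_mem (Set.range_nonempty
    (fun θ : ℝ => zdi (matRe (Complex.exp (-(θ : ℂ) * Complex.I) • A))))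
  refine ⟨θ₀, le_antisymm (zdi_le_re A _) ?_, fun θ => zdi_le_re A _⟩
  apply zdi_ge_of_forall
  intro θ
  simp only at hθ₀
  rw [hθ₀]
  exact Nat.sInf_le ⟨θ, rfl⟩
end
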